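/- arXiv:2009.02712 — 2 statements merged into one kernel-verified Lean document; each statement's English description precedes it below -/
import Mathlib

section
/- Let 0 < ρ₀ < 1, λ₀ > 0, and set B₁ = 43, B₂ = 4.6. If a real number k satisfies k ≥ (1/ρ₀) · max{ B₁/B₂, ln(2B₂ k / λ₀) }, then for every t₀ ≥ e^k and every λ ≥ λ₀, the function ρ ↦ E_ρ(−λ t₀^ρ) is strictly monotonically decreasing on the interval [ρ₀, 1). -/
open Set Real

/-- The Mittag-Leffler function `E_ρ(z) = ∑_{k=0}^∞ z^k / Γ(ρk + 1)`. -/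
noncomputable def mittagLeffler (ρ z : ℝ) : ℝ := ∑' k : ℕ, z ^ k / Real.Gamma (ρ * k + 1)

open MeasureTheory Filter Topology
open Complex (I)

/-!
Hankel's formula for `1 / Γ`, written in the logarithmic coordinate `w = log t`, can be summed
termwise against the power series of `E_ρ(-x)`. Collapsing the contour onto the cut gives
`E_ρ(-x) = ∫₀^∞ exp (-(x / q) ^ (1 / ρ)) sin (πρ) / (πρ (1 + 2 q cos (πρ) + q²)) dq`.
The density is that of Lamperti's law, symmetric under `q ↦ 1 / q`, so the integral folds onto
`(0, 1)`, where the density has mass `1 / 2` for every `ρ`.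

For `x = λ t ^ ρ` the passage from `ρ₁` to `ρ₂ > ρ₁` is a change of density followed by a change of
kernel. On `(0, 1)` the two densities cross only once and the folded kernel decreases in `q`, so the
change of density lowers the integral, for large `x` by at least a multiple of `(ρ₂² - ρ₁²) / x`.
The change of kernel lowers it pointwise if `λ ≤ 1`; if `λ ≥ 1` it raises it by `O(exp (-t / 4))` at
most, which is negligible.
-/

/-! ### Hankel's integral for `1 / Γ` -/

section HankelContour

/-- The integral of `f` over the contour that comes in from `+∞` along `Im w = -π`, goes up along
`Re w = c` and returns to `+∞` along `Im w = π`. This is Hankel's contour around the negative real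
axis in the variable `w = log t`, in which both sides of the cut of `log` are visible. -/
noncomputable def hankelIntegral (f : ℂ → ℂ) (c : ℝ) : ℂ :=
  (∫ u in Ioi c, f (u + (π : ℝ) * I)) - (∫ u in Ioi c, f (u + (-π : ℝ) * I)) +
    I * ∫ y in -π..π, f (c + y * I)

variable {f : ℂ → ℂ} {b : ℝ → ℝ}

lemma abs_neg_pi : |-π| = π := by rw [abs_neg, abs_of_pos pi_pos]

lemma hankelIntegral_eq_of_le (hf : ∀ w : ℂ, |w.im| ≤ π → DifferentiableAt ℂ f w)
    (hint : ∀ θ : ℝ, |θ| = π → ∀ c, IntegrableOn (fun u : ℝ => f (u + θ * I)) (Ioi c))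
    {c d : ℝ} (hcd : c ≤ d) : hankelIntegral f c = hankelIntegral f d := by
  have hπ : -π ≤ π := by linarith [pi_pos]
  have hrect := Complex.integral_boundary_rect_eq_zero_of_differentiableOn f
    (c + (-π : ℝ) * I) (d + (π : ℝ) * I) fun w hw => by
      have him : w.im ∈ Icc (-π) π := by simpa [uIcc_of_le hπ] using hw.2
      exact (hf w (abs_le.2 him)).differentiableWithinAt
  simp only [Complex.add_im, Complex.ofReal_im, Complex.mul_im, Complex.ofReal_re,
    Complex.I_im, Complex.I_re, mul_one, mul_zero, add_zero, zero_add, Complex.add_re,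
    Complex.mul_re, sub_zero, smul_eq_mul] at hrect
  rw [← intervalIntegral.integral_Ioi_sub_Ioi (hint π (abs_of_pos pi_pos) c) hcd,
    ← intervalIntegral.integral_Ioi_sub_Ioi (hint (-π) abs_neg_pi c) hcd] at hrect
  unfold hankelIntegral
  linear_combination -hrect

lemma hankelIntegral_eq (hf : ∀ w : ℂ, |w.im| ≤ π → DifferentiableAt ℂ f w)
    (hint : ∀ θ : ℝ, |θ| = π → ∀ c, IntegrableOn (fun u : ℝ => f (u + θ * I)) (Ioi c))
    (c d : ℝ) : hankelIntegral f c = hankelIntegral f d :=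
  (le_total c d).elim (hankelIntegral_eq_of_le hf hint)
    fun h => (hankelIntegral_eq_of_le hf hint h).symm

lemma tendsto_intervalIntegral_vertical (hb : Tendsto b atBot (𝓝 0))
    (hfb : ∀ᶠ c : ℝ in atBot, ∀ y : ℝ, ‖f (c + y * I)‖ ≤ b c) :
    Tendsto (fun c : ℝ => ∫ y in -π..π, f (c + y * I)) atBot (𝓝 0) := by
  have hb' : Tendsto (fun c => b c * |π - -π|) atBot (𝓝 0) := by
    simpa only [zero_mul] using hb.mul_const |π - -π|
  refine squeeze_zero_norm' ?_ hb'
  filter_upwards [hfb] with c hc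
  exact intervalIntegral.norm_integral_le_of_norm_le_const fun y _ => hc y

lemma hankelIntegral_eq_integral_sub_integral
    (hf : ∀ w : ℂ, |w.im| ≤ π → DifferentiableAt ℂ f w)
    (hint : ∀ θ : ℝ, |θ| = π → Integrable (fun u : ℝ => f (u + θ * I)))
    (hb : Tendsto b atBot (𝓝 0))
    (hfb : ∀ᶠ c : ℝ in atBot, ∀ y : ℝ, ‖f (c + y * I)‖ ≤ b c) (c : ℝ) :
    hankelIntegral f c =
      (∫ u : ℝ, f (u + (π : ℝ) * I)) - ∫ u : ℝ, f (u + (-π : ℝ) * I) := by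
  have hray : ∀ θ : ℝ, |θ| = π → Tendsto (fun d : ℝ => ∫ u in Ioi d, f (u + θ * I)) atBot
      (𝓝 (∫ u : ℝ, f (u + θ * I))) := fun θ hθ =>
    (aecover_Ioi tendsto_id).integral_tendsto_of_countably_generated (hint θ hθ)
  have hlim := ((hray π (abs_of_pos pi_pos)).sub (hray (-π) abs_neg_pi)).add
    ((tendsto_intervalIntegral_vertical hb hfb).const_mul I)
  rw [mul_zero, add_zero] at hlim
  have heq := hankelIntegral_eq hf (fun θ hθ _ => (hint θ hθ).integrableOn) c
  exact tendsto_nhds_unique (tendsto_const_nhds.congr heq) hlim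

end HankelContour

section ExponentialSubstitution

variable {a r : ℝ}

lemma image_mul_exp_mul_univ (ha : 0 < a) (hr : r ≠ 0) :
    (fun u => a * exp (r * u)) '' univ = Ioi 0 := by
  refine Subset.antisymm (by rintro _ ⟨u, -, rfl⟩; exact mul_pos ha (exp_pos _)) fun q hq => ?_
  refine ⟨log (q / a) / r, mem_univ _, ?_⟩
  beta_reduce
  rw [mul_div_cancel₀ _ hr, exp_log (div_pos hq ha), mul_div_cancel₀ _ ha.ne']

lemma injective_mul_exp_mul (ha : 0 < a) (hr : r ≠ 0) :
    Function.Injective fun u => a * exp (r * u) :=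
  (mul_right_injective₀ ha.ne').comp (exp_injective.comp (mul_right_injective₀ hr))

lemma hasDerivAt_mul_exp_mul (a r u : ℝ) :
    HasDerivAt (fun u => a * exp (r * u)) (r * (a * exp (r * u))) u :=
  (((hasDerivAt_id u).const_mul r).exp.const_mul a).congr_deriv (by simp only [id_eq]; ring)

lemma abs_deriv_mul_exp_mul (ha : 0 < a) (r u : ℝ) :
    |r * (a * exp (r * u))| = |r| * (a * exp (r * u)) := by
  rw [abs_mul, abs_of_pos (mul_pos ha (exp_pos _))]

lemma integral_comp_mul_exp_mul (ha : 0 < a) (hr : r ≠ 0) (g : ℝ → ℝ) :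
    ∫ u, |r| * (a * exp (r * u)) * g (a * exp (r * u)) = ∫ q in Ioi 0, g q := by
  rw [← image_mul_exp_mul_univ ha hr, integral_image_eq_integral_abs_deriv_smul MeasurableSet.univ
    (fun u _ => (hasDerivAt_mul_exp_mul a r u).hasDerivWithinAt)
    (injective_mul_exp_mul ha hr).injOn, setIntegral_univ]
  simp_rw [abs_deriv_mul_exp_mul ha, smul_eq_mul]

lemma integrable_comp_mul_exp_mul_iff (ha : 0 < a) (hr : r ≠ 0) {g : ℝ → ℝ} :
    Integrable (fun u => |r| * (a * exp (r * u)) * g (a * exp (r * u))) ↔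
      IntegrableOn g (Ioi 0) := by
  rw [← image_mul_exp_mul_univ ha hr, integrableOn_image_iff_integrableOn_abs_deriv_smul
    MeasurableSet.univ (fun u _ => (hasDerivAt_mul_exp_mul a r u).hasDerivWithinAt)
    (injective_mul_exp_mul ha hr).injOn, integrableOn_univ]
  simp_rw [abs_deriv_mul_exp_mul ha, smul_eq_mul]

lemma exp_neg_exp_add_mul_eq (s u : ℝ) :
    exp (-exp u + s * u) =
      |1| * (1 * exp (1 * u)) * (exp (-(1 * exp (1 * u))) * (1 * exp (1 * u)) ^ (s - 1)) := by
  rw [abs_one, one_mul, one_mul, one_mul, ← exp_mul, ← exp_add, ← exp_add]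
  ring_nf

lemma integrable_exp_neg_exp_add_mul {s : ℝ} (hs : 0 < s) :
    Integrable fun u : ℝ => exp (-exp u + s * u) := by
  simp_rw [exp_neg_exp_add_mul_eq]
  exact (integrable_comp_mul_exp_mul_iff one_pos one_ne_zero).2 (GammaIntegral_convergent hs)

lemma integral_exp_neg_exp_add_mul {s : ℝ} (hs : 0 < s) :
    ∫ u : ℝ, exp (-exp u + s * u) = Gamma s := by
  simp_rw [exp_neg_exp_add_mul_eq]
  rw [integral_comp_mul_exp_mul one_pos one_ne_zero fun t => exp (-t) * t ^ (s - 1),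
    Gamma_eq_integral hs]

end ExponentialSubstitution

section HankelKernel

variable {θ : ℝ}

/-- The integrand `exp (e ^ w - a w)`, which is `e ^ t t ^ (-a - 1) dt` for `t = e ^ w`, of Hankel's
integral for `1 / Γ (1 + a)`. -/
noncomputable def hankelKernel (a : ℝ) (w : ℂ) : ℂ := Complex.exp (Complex.exp w - a * w)

@[fun_prop]
lemma continuous_hankelKernel (a : ℝ) : Continuous (hankelKernel a) := by
  unfold hankelKernel; fun_prop

lemma norm_hankelKernel_le (a : ℝ) (w : ℂ) : ‖hankelKernel a w‖ ≤ exp (exp w.re - a * w.re) := by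
  have hcos := mul_le_of_le_one_right (exp_pos w.re).le (cos_le_one w.im)
  simpa [hankelKernel, Complex.norm_exp, Complex.exp_re] using hcos

lemma hasDerivAt_hankelKernel (a : ℝ) (w : ℂ) :
    HasDerivAt (hankelKernel a) (hankelKernel (a - 1) w - a * hankelKernel a w) w := by
  have hexp := ((Complex.hasDerivAt_exp w).sub ((hasDerivAt_id w).const_mul (a : ℂ))).cexp
  have hshift : hankelKernel (a - 1) w = hankelKernel a w * Complex.exp w := by
    rw [hankelKernel, hankelKernel, ← Complex.exp_add]
    push_cast
    ring_nf
  refine hexp.congr_deriv ?_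
  rw [hshift, hankelKernel]
  simp only [Pi.sub_apply, id_eq, mul_one]
  ring

lemma exp_mul_I_of_abs_eq_pi (hθ : |θ| = π) : Complex.exp (θ * I) = -1 := by
  rcases eq_or_eq_neg_of_abs_eq hθ with rfl | rfl
  · exact Complex.exp_pi_mul_I
  · rw [Complex.ofReal_neg, neg_mul, Complex.exp_neg, Complex.exp_pi_mul_I]
    norm_num

lemma hankelKernel_ray (a : ℝ) (hθ : |θ| = π) (u : ℝ) :
    hankelKernel a (u + θ * I) =
      (exp (-exp u - a * u) : ℝ) * Complex.exp (-(a * θ : ℝ) * I) := by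
  rw [hankelKernel, Complex.exp_add, exp_mul_I_of_abs_eq_pi hθ, Complex.ofReal_exp,
    ← Complex.exp_add]
  push_cast
  ring_nf

lemma integrable_hankelKernel_ray {a : ℝ} (ha : a < 0) (hθ : |θ| = π) :
    Integrable fun u : ℝ => hankelKernel a (u + θ * I) := by
  have hint := integrable_exp_neg_exp_add_mul (neg_pos.2 ha)
  simp_rw [neg_mul, ← sub_eq_add_neg] at hint
  simp_rw [hankelKernel_ray a hθ]
  exact (hint.ofReal (𝕜 := ℂ)).mul_const _

lemma integrableOn_exp_neg_exp_sub_mul (a c : ℝ) :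
    IntegrableOn (fun u : ℝ => exp (-exp u - a * u)) (Ioi c) := by
  obtain ⟨n, hn⟩ := exists_nat_gt (-a)
  have hint := (integrable_exp_neg_exp_add_mul (s := n + 1) (by positivity)).const_mul
    (exp (-(a + (n + 1)) * c))
  refine hint.integrableOn.mono' (by fun_prop) ?_
  filter_upwards [self_mem_ae_restrict measurableSet_Ioi] with u hu
  rw [norm_of_nonneg (exp_pos _).le, ← exp_add, exp_le_exp]
  nlinarith [mem_Ioi.1 hu]

lemma integrableOn_hankelKernel_ray (a : ℝ) (hθ : |θ| = π) (c : ℝ) :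
    IntegrableOn (fun u : ℝ => hankelKernel a (u + θ * I)) (Ioi c) := by
  simp_rw [hankelKernel_ray a hθ]
  exact ((integrableOn_exp_neg_exp_sub_mul a c).ofReal (𝕜 := ℂ)).mul_const _

lemma hankelIntegral_hankelKernel_eq (a c d : ℝ) :
    hankelIntegral (hankelKernel a) c = hankelIntegral (hankelKernel a) d :=
  hankelIntegral_eq (fun w _ => (hasDerivAt_hankelKernel a w).differentiableAt)
    (fun _ => integrableOn_hankelKernel_ray a) c d

lemma tendsto_exp_exp_sub_mul_atBot {a : ℝ} (ha : a < 0) :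
    Tendsto (fun c : ℝ => exp (exp c - a * c)) atBot (𝓝 0) := by
  have hlin : Tendsto (fun c : ℝ => -a * c) atBot atBot :=
    tendsto_id.const_mul_atBot (neg_pos.2 ha)
  refine (tendsto_exp_atBot.comp (tendsto_exp_atBot.add_atBot hlin)).congr fun c => ?_
  simp only [Function.comp_apply, neg_mul, sub_eq_add_neg]

lemma Gamma_mul_sin_pi_mul {s : ℝ} (hs : 0 < s) :
    Gamma s * sin (π * s) = π * (Gamma (1 - s))⁻¹ := by
  have hΓ := (Gamma_pos_of_pos hs).ne'
  have hrefl := Gamma_mul_Gamma_one_sub s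
  -- If `sin (π s) = 0`, the junk value `π / 0 = 0` in the reflection formula matches the junk
  -- value `0` of `Gamma` at its poles.
  rcases eq_or_ne (sin (π * s)) 0 with hsin | hsin
  · rw [hsin, div_zero, mul_eq_zero, or_iff_right hΓ] at hrefl
    rw [hsin, hrefl, mul_zero, inv_zero, mul_zero]
  · have hΓ' : Gamma (1 - s) ≠ 0 := fun h => by
      rw [h, mul_zero] at hrefl
      exact div_ne_zero pi_ne_zero hsin hrefl.symm
    rw [eq_div_iff hsin] at hrefl
    rw [eq_mul_inv_iff_mul_eq₀ hΓ']
    linear_combination hrefl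

lemma hankelIntegral_hankelKernel_of_neg {a : ℝ} (ha : a < 0) (c : ℝ) :
    hankelIntegral (hankelKernel a) c = 2 * π * I * (Gamma (1 + a) : ℂ)⁻¹ := by
  have hΓint := integral_exp_neg_exp_add_mul (neg_pos.2 ha)
  simp_rw [neg_mul, ← sub_eq_add_neg] at hΓint
  have hsin : Complex.exp (-(a * π : ℝ) * I) - Complex.exp (-(a * -π : ℝ) * I) =
      2 * (sin (π * -a) : ℝ) * I := by
    rw [Complex.ofReal_sin, Complex.sin]
    push_cast
    linear_combination (norm := ring_nf)
      (Complex.exp (-(a * π) * I) - Complex.exp (a * π * I)) * Complex.I_mul_I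
  have hΓ : (Gamma (-a) * sin (π * -a) : ℂ) = π * (Gamma (1 + a) : ℂ)⁻¹ := by
    have := Gamma_mul_sin_pi_mul (neg_pos.2 ha)
    rw [sub_neg_eq_add] at this
    exact_mod_cast this
  rw [hankelIntegral_eq_integral_sub_integral
    (fun w _ => (hasDerivAt_hankelKernel a w).differentiableAt)
    (fun _ => integrable_hankelKernel_ray ha) (tendsto_exp_exp_sub_mul_atBot ha)
    (Eventually.of_forall fun c y => by simpa using norm_hankelKernel_le a (c + y * I))]
  simp_rw [hankelKernel_ray a (abs_of_pos pi_pos),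
    hankelKernel_ray a (θ := -π) abs_neg_pi]
  rw [integral_mul_const, integral_mul_const, integral_complex_ofReal, hΓint, ← mul_sub, hsin]
  linear_combination 2 * I * hΓ

lemma hankelIntegral_hankelKernel_zero (c : ℝ) :
    hankelIntegral (hankelKernel 0) c = 2 * π * I := by
  have hvert : ∀ d : ℝ, hankelIntegral (hankelKernel 0) d =
      I * ((∫ y in -π..π, (hankelKernel 0 (d + y * I) - 1)) + 2 * π) := fun d => by
    rw [intervalIntegral.integral_sub (Continuous.intervalIntegrable (by fun_prop) _ _)
      (by simp only [intervalIntegrable_const]), intervalIntegral.integral_const, hankelIntegral]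
    simp_rw [hankelKernel_ray 0 (abs_of_pos pi_pos),
      hankelKernel_ray 0 (θ := -π) abs_neg_pi]
    simp only [zero_mul, Complex.ofReal_zero, neg_zero, Complex.real_smul]
    push_cast
    ring
  have hlim : Tendsto (fun d : ℝ => ∫ y in -π..π, (hankelKernel 0 (d + y * I) - 1)) atBot (𝓝 0) :=
    tendsto_intervalIntegral_vertical (f := fun w => hankelKernel 0 w - 1)
      (b := fun d => 2 * exp d) (by simpa only [mul_zero] using tendsto_exp_atBot.const_mul 2) (by
        filter_upwards [eventually_le_atBot (0 : ℝ)] with d hd y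
        have hexp := Complex.norm_exp_sub_one_le (x := Complex.exp (d + y * I))
          (by simpa [Complex.norm_exp] using hd)
        simpa [hankelKernel, Complex.norm_exp] using hexp)
  have htotal := (hlim.add_const (2 * π : ℂ)).const_mul I
  simp_rw [← hvert, zero_add] at htotal
  rw [tendsto_nhds_unique
    (tendsto_const_nhds.congr fun d => hankelIntegral_hankelKernel_eq 0 c d) htotal]
  ring

lemma tendsto_exp_neg_exp_sub_mul_atTop (a : ℝ) :
    Tendsto (fun u : ℝ => exp (-exp u - a * u)) atTop (𝓝 0) := by
  have hratio : Tendsto (fun u : ℝ => 1 + a * (u * exp (-u))) atTop (𝓝 1) := by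
    simpa using ((tendsto_pow_mul_exp_neg_atTop_nhds_zero 1).const_mul a).const_add 1
  have hprod := tendsto_neg_atTop_atBot.comp (tendsto_exp_atTop.atTop_mul_pos one_pos hratio)
  refine tendsto_exp_atBot.comp (hprod.congr fun u => ?_)
  rw [Function.comp_apply, exp_neg]
  field_simp
  ring

lemma integral_deriv_hankelKernel_ray (a : ℝ) (hθ : |θ| = π) (c : ℝ) :
    (∫ u in Ioi c, hankelKernel (a - 1) (u + θ * I)) -
      a * ∫ u in Ioi c, hankelKernel a (u + θ * I) = -hankelKernel a (c + θ * I) := by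
  have hderiv : ∀ u : ℝ, HasDerivAt (fun u : ℝ => hankelKernel a (u + θ * I))
      (hankelKernel (a - 1) (u + θ * I) - a * hankelKernel a (u + θ * I)) u := fun u => by
    have hray : HasDerivAt (fun u : ℝ => (u + θ * I : ℂ)) 1 u :=
      (hasDerivAt_id u).ofReal_comp.add_const _
    exact ((hasDerivAt_hankelKernel a (u + θ * I)).comp u hray).congr_deriv (mul_one _)
  have hlim : Tendsto (fun u : ℝ => hankelKernel a (u + θ * I)) atTop (𝓝 0) := by
    simp_rw [hankelKernel_ray a hθ]
    simpa using ((Complex.continuous_ofReal.tendsto 0).comp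
      (tendsto_exp_neg_exp_sub_mul_atTop a)).mul_const (Complex.exp (-(a * θ : ℝ) * I))
  have hint := integrableOn_hankelKernel_ray (a - 1) hθ c
  have hint' := (integrableOn_hankelKernel_ray a hθ c).const_mul (a : ℂ)
  rw [← integral_const_mul, ← integral_sub hint hint', integral_Ioi_of_hasDerivAt_of_tendsto
    (hderiv c).continuousAt.continuousWithinAt (fun u _ => hderiv u) (hint.sub hint') hlim,
    zero_sub]

lemma integral_deriv_hankelKernel_vertical (a c : ℝ) :
    I * ((∫ y in -π..π, hankelKernel (a - 1) (c + y * I)) -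
      a * ∫ y in -π..π, hankelKernel a (c + y * I)) =
        hankelKernel a (c + (π : ℝ) * I) - hankelKernel a (c + (-π : ℝ) * I) := by
  have hderiv : ∀ y : ℝ, HasDerivAt (fun y : ℝ => hankelKernel a (c + y * I))
      (I * (hankelKernel (a - 1) (c + y * I) - a * hankelKernel a (c + y * I))) y := fun y => by
    have hsegment : HasDerivAt (fun y : ℝ => (c + y * I : ℂ)) (1 * I) y :=
      ((hasDerivAt_id y).ofReal_comp.mul_const I).const_add _
    have hcomp := (hasDerivAt_hankelKernel a (c + y * I)).comp y hsegment
    rwa [one_mul, mul_comm] at hcomp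
  rw [← intervalIntegral.integral_eq_sub_of_hasDerivAt (fun y _ => hderiv y)
    (Continuous.intervalIntegrable (by fun_prop) _ _), intervalIntegral.integral_const_mul,
    intervalIntegral.integral_sub (Continuous.intervalIntegrable (by fun_prop) _ _)
      (Continuous.intervalIntegrable (by fun_prop) _ _), intervalIntegral.integral_const_mul]

lemma hankelIntegral_hankelKernel_sub_one (a c : ℝ) :
    hankelIntegral (hankelKernel (a - 1)) c = a * hankelIntegral (hankelKernel a) c := by
  unfold hankelIntegral
  linear_combination integral_deriv_hankelKernel_ray a (abs_of_pos pi_pos) c -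
    integral_deriv_hankelKernel_ray a (θ := -π) abs_neg_pi c +
    integral_deriv_hankelKernel_vertical a c

theorem hankelIntegral_hankelKernel (a c : ℝ) :
    hankelIntegral (hankelKernel a) c = 2 * π * I * (Gamma (1 + a) : ℂ)⁻¹ := by
  obtain ⟨n, hn⟩ := exists_nat_ge a
  induction n generalizing a with
  | zero =>
    rcases (show a ≤ 0 by simpa using hn).lt_or_eq with ha | rfl
    · exact hankelIntegral_hankelKernel_of_neg ha c
    · simp only [hankelIntegral_hankelKernel_zero, add_zero, Gamma_one, Complex.ofReal_one,
        inv_one, mul_one]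
  | succ n ih =>
    rcases eq_or_ne a 0 with rfl | ha
    · exact ih 0 n.cast_nonneg
    · have hrec := ih (a - 1) (by push_cast at hn; linarith)
      rw [hankelIntegral_hankelKernel_sub_one, add_sub_cancel] at hrec
      have ha' : (a : ℂ) ≠ 0 := by exact_mod_cast ha
      rw [add_comm 1 a, Gamma_add_one ha, Complex.ofReal_mul, mul_inv, ← mul_assoc,
        mul_right_comm, ← hrec]
      field_simp

end HankelKernel

/-! ### The integral representation of `E_ρ(-x)` -/

section LampertiDensity

/-- The density of Lamperti's law: with `φ = π ρ` it is the weight against which the exponentials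
`exp (-(x q) ^ (1 / ρ))` are superposed in `E_ρ(-x)`. On `(0, ∞)` it has mass `1`. -/
noncomputable def lampertiDensity (φ q : ℝ) : ℝ := sinc φ / (1 + 2 * q * cos φ + q ^ 2)

variable {φ : ℝ}

lemma one_add_two_mul_mul_cos_add_sq_pos (hφ : φ ∈ Ioo 0 π) (q : ℝ) :
    0 < 1 + 2 * q * cos φ + q ^ 2 := by
  have hsin := sin_pos_of_mem_Ioo hφ
  nlinarith [sq_nonneg (q + cos φ), sin_sq_add_cos_sq φ]

lemma lampertiDensity_inv (φ : ℝ) {q : ℝ} (hq : q ≠ 0) :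
    lampertiDensity φ q⁻¹ = q ^ 2 * lampertiDensity φ q := by
  have hquad : 1 + 2 * q⁻¹ * cos φ + q⁻¹ ^ 2 = (1 + 2 * q * cos φ + q ^ 2) / q ^ 2 := by
    field_simp
    ring
  rw [lampertiDensity, lampertiDensity, hquad, div_div_eq_mul_div, mul_div_right_comm,
    mul_comm]

lemma inv_sub_inv_eq_lampertiDensity (hφ : φ ∈ Ioo 0 π) (p : ℝ) :
    (1 + p * Complex.exp (-φ * I))⁻¹ - (1 + p * Complex.exp (φ * I))⁻¹ =
      2 * I * (φ * p * lampertiDensity φ p : ℝ) := by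
  have hD := one_add_two_mul_mul_cos_add_sq_pos hφ p
  have hinv : Complex.exp (-φ * I) * Complex.exp (φ * I) = 1 := by
    rw [← Complex.exp_add, neg_mul, neg_add_cancel, Complex.exp_zero]
  have hprod : (1 + p * Complex.exp (-φ * I)) * (1 + p * Complex.exp (φ * I)) =
      (1 + 2 * p * cos φ + p ^ 2 : ℝ) := by
    push_cast
    rw [Complex.cos]
    linear_combination p ^ 2 * hinv
  have hne : (1 + p * Complex.exp (-φ * I)) * (1 + p * Complex.exp (φ * I)) ≠ 0 := by
    rw [hprod]
    exact_mod_cast hD.ne'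
  have hnum : (1 + p * Complex.exp (φ * I)) - (1 + p * Complex.exp (-φ * I)) =
      2 * I * (p * sin φ : ℝ) := by
    push_cast
    rw [Complex.sin]
    linear_combination (norm := ring_nf)
      p * (Complex.exp (φ * I) - Complex.exp (-φ * I)) * Complex.I_mul_I
  have hdensity : φ * p * lampertiDensity φ p = p * sin φ / (1 + 2 * p * cos φ + p ^ 2) := by
    rw [lampertiDensity, sinc_of_ne_zero hφ.1.ne']
    field_simp [hφ.1.ne']
  rw [inv_sub_inv (left_ne_zero_of_mul hne) (right_ne_zero_of_mul hne), hprod, hnum, hdensity,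
    Complex.ofReal_div, mul_div_assoc]

end LampertiDensity

section MittagLefflerKernel

/-- The sum `∑ (-x) ^ k • hankelKernel (ρ k)`, whose Hankel integral is `2 π i E_ρ(-x)`. -/
noncomputable def mittagLefflerKernel (ρ x : ℝ) (w : ℂ) : ℂ :=
  hankelKernel 0 w / (1 + x * Complex.exp (-(ρ * w)))

variable {ρ x c θ : ℝ}

lemma pi_mul_mem_Ioo (hρ : ρ ∈ Ioo 0 1) : π * ρ ∈ Ioo 0 π :=
  ⟨mul_pos pi_pos hρ.1, mul_lt_of_lt_one_right pi_pos hρ.2⟩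

lemma hankelKernel_mul_natCast (ρ x : ℝ) (k : ℕ) (w : ℂ) :
    (-x : ℂ) ^ k * hankelKernel (ρ * k) w =
      hankelKernel 0 w * (-(x * Complex.exp (-(ρ * w)))) ^ k := by
  have hsplit : hankelKernel (ρ * k) w = hankelKernel 0 w * Complex.exp (k * -(ρ * w)) := by
    rw [hankelKernel, hankelKernel, ← Complex.exp_add]
    push_cast
    ring_nf
  rw [hsplit, Complex.exp_nat_mul]
  ring

lemma norm_mul_exp_neg_mul (hx : 0 ≤ x) (ρ : ℝ) (w : ℂ) :
    ‖(x * Complex.exp (-(ρ * w)) : ℂ)‖ = x * exp (-(ρ * w.re)) := by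
  simp [Complex.norm_exp, abs_of_nonneg hx]

lemma hasSum_integral_hankelKernel_comp {α : Type*} [MeasurableSpace α] {μ : Measure α}
    {γ : α → ℂ} (hγ : Measurable γ) (hρ : 0 ≤ ρ) (hx : 0 ≤ x) (hc : x * exp (-(ρ * c)) < 1)
    (hre : ∀ᵐ a ∂μ, c ≤ (γ a).re) (hint : Integrable (fun a => hankelKernel 0 (γ a)) μ) :
    HasSum (fun k : ℕ => (-x : ℂ) ^ k * ∫ a, hankelKernel (ρ * k) (γ a) ∂μ)
      (∫ a, mittagLefflerKernel ρ x (γ a) ∂μ) := by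
  set r := x * exp (-(ρ * c)) with hr
  have hr₀ : 0 ≤ r := by positivity
  have hratio : ∀ᵐ a ∂μ, ‖-(x * Complex.exp (-(ρ * γ a)) : ℂ)‖ ≤ r := by
    filter_upwards [hre] with a ha
    rw [norm_neg, norm_mul_exp_neg_mul hx, hr]
    gcongr
  simp_rw [← integral_const_mul, hankelKernel_mul_natCast]
  refine hasSum_integral_of_dominated_convergence
    (fun k a => r ^ k * ‖hankelKernel 0 (γ a)‖) (fun k => ?_) (fun k => ?_) ?_ ?_ ?_
  · exact hint.aestronglyMeasurable.mul (Measurable.aestronglyMeasurable (by fun_prop))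
  · filter_upwards [hratio] with a ha
    rw [norm_mul, norm_pow, mul_comm]
    gcongr
  · exact ae_of_all _ fun a => (summable_geometric_of_lt_one hr₀ hc).mul_right _
  · simp_rw [tsum_mul_right]
    exact hint.norm.const_mul _
  · filter_upwards [hratio] with a ha
    have hgeom := (hasSum_geometric_of_norm_lt_one (ha.trans_lt hc)).mul_left (hankelKernel 0 (γ a))
    rwa [sub_neg_eq_add, ← div_eq_mul_inv] at hgeom

lemma hasSum_hankelIntegral_hankelKernel (hρ : 0 ≤ ρ) (hx : 0 ≤ x)
    (hc : x * exp (-(ρ * c)) < 1) :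
    HasSum (fun k : ℕ => (-x : ℂ) ^ k * hankelIntegral (hankelKernel (ρ * k)) c)
      (hankelIntegral (mittagLefflerKernel ρ x) c) := by
  have hray : ∀ θ : ℝ, |θ| = π →
      HasSum (fun k : ℕ => (-x : ℂ) ^ k * ∫ u in Ioi c, hankelKernel (ρ * k) (u + θ * I))
        (∫ u in Ioi c, mittagLefflerKernel ρ x (u + θ * I)) := fun θ hθ =>
    hasSum_integral_hankelKernel_comp (by fun_prop) hρ hx hc
      (ae_restrict_of_forall_mem measurableSet_Ioi fun u hu => by simpa using (mem_Ioi.1 hu).le)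
      (integrableOn_hankelKernel_ray 0 hθ c)
  have hvert := hasSum_integral_hankelKernel_comp (μ := volume.restrict (Ioc (-π) π))
    (γ := fun y : ℝ => c + y * I) (by fun_prop) hρ hx hc (ae_of_all _ fun y => by simp)
    ((Continuous.integrableOn_Icc (by fun_prop)).mono_set Ioc_subset_Icc_self)
  have hsum := ((hray π (abs_of_pos pi_pos)).sub
    (hray (-π) abs_neg_pi)).add (hvert.mul_left I)
  unfold hankelIntegral
  simp_rw [intervalIntegral.integral_of_le (neg_le_self pi_pos.le)]
  exact hsum.congr_fun fun k => by ring

lemma one_add_mul_exp_ne_zero (hx : 0 < x) {z : ℂ} (hz : |z.im| < π) :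
    1 + x * Complex.exp z ≠ 0 := fun h => by
  have hexp : Complex.exp z = (-x⁻¹ : ℝ) := by
    have hx' : (x : ℂ) ≠ 0 := by exact_mod_cast hx.ne'
    push_cast
    field_simp
    linear_combination h
  have harg := congrArg Complex.im (Complex.log_exp (abs_lt.1 hz).1 (abs_lt.1 hz).2.le)
  rw [hexp, Complex.log_im, Complex.arg_ofReal_of_neg (neg_lt_zero.2 (inv_pos.2 hx))] at harg
  exact (abs_lt.1 hz).2.ne' harg

lemma differentiableAt_mittagLefflerKernel (hρ : ρ ∈ Ioo 0 1) (hx : 0 < x) {w : ℂ}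
    (hw : |w.im| ≤ π) : DifferentiableAt ℂ (mittagLefflerKernel ρ x) w := by
  have him : |(-(ρ * w) : ℂ).im| < π := by
    have : ρ * |w.im| < π := by nlinarith [hρ.1, hρ.2, pi_pos, abs_nonneg w.im]
    simpa [abs_mul, abs_of_pos hρ.1] using this
  exact (hasDerivAt_hankelKernel 0 w).differentiableAt.div (by fun_prop)
    (one_add_mul_exp_ne_zero hx him)

lemma mittagLefflerKernel_ray (ρ x : ℝ) (hθ : |θ| = π) (u : ℝ) :
    mittagLefflerKernel ρ x (u + θ * I) =
      exp (-exp u) * (1 + (x * exp (-ρ * u) : ℝ) * Complex.exp (-(θ * ρ : ℝ) * I))⁻¹ := by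
  rw [mittagLefflerKernel, hankelKernel_ray 0 hθ, div_eq_mul_inv, Complex.ofReal_mul x,
    Complex.ofReal_exp (-ρ * u), mul_assoc (x : ℂ), ← Complex.exp_add]
  push_cast
  simp only [zero_mul, sub_zero, neg_zero, Complex.exp_zero, mul_one]
  ring_nf

lemma integrable_mittagLefflerKernel_ray (hρ : ρ ∈ Ioo 0 1) (hx : 0 < x) (hθ : |θ| = π) :
    Integrable fun u : ℝ => mittagLefflerKernel ρ x (u + θ * I) := by
  have hsin₀ : 0 < sin (π * ρ) := sin_pos_of_mem_Ioo (pi_mul_mem_Ioo hρ)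
  have hsin : |sin (θ * ρ)| = sin (π * ρ) := by
    rcases eq_or_eq_neg_of_abs_eq hθ with rfl | rfl <;> simp [abs_of_pos hsin₀]
  refine ((integrable_exp_neg_exp_add_mul hρ.1).const_mul (x * sin (π * ρ))⁻¹).mono' ?_ ?_
  · have hcont : Continuous fun u : ℝ => mittagLefflerKernel ρ x (u + θ * I) :=
      continuous_iff_continuousAt.2 fun u => ContinuousAt.comp
        (f := fun u : ℝ => (u + θ * I : ℂ)) (differentiableAt_mittagLefflerKernel hρ hx
          (by simp [hθ])).continuousAt (by fun_prop)
    exact hcont.aestronglyMeasurable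
  · refine ae_of_all _ fun u => ?_
    have him := Complex.abs_im_le_norm
      (1 + (x * exp (-ρ * u) : ℝ) * Complex.exp (-(θ * ρ : ℝ) * I))
    rw [← Complex.ofReal_neg, Complex.add_im, Complex.one_im, zero_add, Complex.im_ofReal_mul,
      Complex.exp_ofReal_mul_I_im, sin_neg, abs_mul, abs_neg, hsin,
      abs_of_pos (mul_pos hx (exp_pos _))] at him
    rw [mittagLefflerKernel_ray ρ x hθ, norm_mul, norm_inv, Complex.norm_real,
      norm_of_nonneg (exp_pos _).le, ← Complex.ofReal_neg]
    calc exp (-exp u) * _⁻¹ ≤ exp (-exp u) * (x * exp (-ρ * u) * sin (π * ρ))⁻¹ := by gcongr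
      _ = (x * sin (π * ρ))⁻¹ * exp (-exp u + ρ * u) := by
        rw [exp_add, neg_mul, exp_neg (ρ * u)]
        field_simp

lemma eventually_norm_mittagLefflerKernel_le (hρ : 0 < ρ) (hx : 0 < x) :
    ∀ᶠ c : ℝ in atBot, ∀ y : ℝ,
      ‖mittagLefflerKernel ρ x (c + y * I)‖ ≤ 2 / x * exp (exp c - -ρ * c) := by
  have hlim : Tendsto (fun c : ℝ => x * exp (-(ρ * c))) atBot atTop :=
    (tendsto_exp_atTop.comp (tendsto_neg_atBot_atTop.comp
      (tendsto_id.const_mul_atBot hρ))).const_mul_atTop hx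
  filter_upwards [hlim.eventually_ge_atTop 2] with c hc y
  have hnum : ‖hankelKernel 0 (c + y * I)‖ ≤ exp (exp c) := by
    simpa using norm_hankelKernel_le 0 (c + y * I)
  have hden : x * exp (-(ρ * c)) / 2 ≤ ‖1 + x * Complex.exp (-(ρ * (c + y * I)))‖ := by
    have htri := norm_sub_le_norm_add (x * Complex.exp (-(ρ * (c + y * I)))) 1
    rw [norm_mul_exp_neg_mul hx.le, norm_one, add_comm (_ * _)] at htri
    simp only [Complex.add_re, Complex.ofReal_re, Complex.re_ofReal_mul, Complex.I_re,
      mul_zero, add_zero] at htri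
    linarith
  rw [mittagLefflerKernel, norm_div]
  calc _ / _ ≤ exp (exp c) / (x * exp (-(ρ * c)) / 2) := by gcongr
    _ = 2 / x * exp (exp c - -ρ * c) := by
      rw [neg_mul, sub_neg_eq_add, exp_add, exp_neg]
      field_simp

lemma mittagLefflerKernel_jump (hρ : ρ ∈ Ioo 0 1) (hx : 0 < x) (u : ℝ) :
    mittagLefflerKernel ρ x (u + (π : ℝ) * I) - mittagLefflerKernel ρ x (u + (-π : ℝ) * I) =
      2 * π * I * (|-ρ| * (x * exp (-ρ * u)) * (exp (-(x / (x * exp (-ρ * u))) ^ (1 / ρ)) *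
        lampertiDensity (π * ρ) (x * exp (-ρ * u))) : ℝ) := by
  have hjump := inv_sub_inv_eq_lampertiDensity (pi_mul_mem_Ioo hρ) (x * exp (-ρ * u))
  have hpow : (x / (x * exp (-ρ * u))) ^ (1 / ρ) = exp u := by
    have hρ₀ := hρ.1.ne'
    rw [← div_div, div_self hx.ne', one_div, ← exp_neg, ← exp_mul]
    field_simp
  rw [mittagLefflerKernel_ray ρ x (abs_of_pos pi_pos),
    mittagLefflerKernel_ray ρ x (θ := -π) abs_neg_pi, ← mul_sub,
    neg_mul π ρ, Complex.ofReal_neg, neg_neg, hjump, hpow, abs_neg, abs_of_pos hρ.1]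
  push_cast
  ring

lemma integrableOn_exp_neg_div_rpow_mul_lampertiDensity (hρ : ρ ∈ Ioo 0 1) (hx : 0 < x) :
    IntegrableOn (fun q => exp (-(x / q) ^ (1 / ρ)) * lampertiDensity (π * ρ) q) (Ioi 0) := by
  rw [← integrable_comp_mul_exp_mul_iff hx (neg_ne_zero.2 hρ.1.ne')]
  have hint := (((integrable_mittagLefflerKernel_ray hρ hx (abs_of_pos pi_pos)).sub
    (integrable_mittagLefflerKernel_ray hρ hx (θ := -π) abs_neg_pi)).const_mul (2 * π * I)⁻¹).re
  refine hint.congr (ae_of_all _ fun u => ?_)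
  beta_reduce
  rw [Pi.sub_apply, mittagLefflerKernel_jump hρ hx, inv_mul_cancel_left₀ Complex.two_pi_I_ne_zero]
  exact Complex.ofReal_re _

lemma hankelIntegral_mittagLefflerKernel (hρ : ρ ∈ Ioo 0 1) (hx : 0 < x) (c : ℝ) :
    hankelIntegral (mittagLefflerKernel ρ x) c = 2 * π * I *
      (∫ q in Ioi 0, exp (-(x / q) ^ (1 / ρ)) * lampertiDensity (π * ρ) q : ℝ) := by
  have hint := fun θ (hθ : |θ| = π) => integrable_mittagLefflerKernel_ray hρ hx hθ
  have hbound : Tendsto (fun c : ℝ => 2 / x * exp (exp c - -ρ * c)) atBot (𝓝 0) := by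
    simpa only [mul_zero] using
      (tendsto_exp_exp_sub_mul_atBot (neg_lt_zero.2 hρ.1)).const_mul (2 / x)
  rw [hankelIntegral_eq_integral_sub_integral
    (fun _ => differentiableAt_mittagLefflerKernel hρ hx) hint hbound
    (eventually_norm_mittagLefflerKernel_le hρ.1 hx),
    ← integral_sub (hint π (abs_of_pos pi_pos)) (hint (-π) abs_neg_pi)]
  simp_rw [mittagLefflerKernel_jump hρ hx]
  rw [integral_const_mul, integral_complex_ofReal, integral_comp_mul_exp_mul hx
    (neg_ne_zero.2 hρ.1.ne') fun q => exp (-(x / q) ^ (1 / ρ)) * lampertiDensity (π * ρ) q]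

theorem mittagLeffler_neg_eq_integral_Ioi (hρ : ρ ∈ Ioo 0 1) (hx : 0 < x) :
    mittagLeffler ρ (-x) =
      ∫ q in Ioi 0, exp (-(x / q) ^ (1 / ρ)) * lampertiDensity (π * ρ) q := by
  have hc : x * exp (-(ρ * (log (2 * x) / ρ))) < 1 := by
    rw [mul_div_cancel₀ _ hρ.1.ne', exp_neg, exp_log (by positivity)]
    field_simp
    norm_num
  have hsum := (hasSum_hankelIntegral_hankelKernel hρ.1.le hx.le hc).mul_left (2 * π * I)⁻¹
  rw [hankelIntegral_mittagLefflerKernel hρ hx,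
    inv_mul_cancel_left₀ Complex.two_pi_I_ne_zero] at hsum
  refine (Complex.hasSum_ofReal.1 (hsum.congr_fun fun k => ?_)).tsum_eq
  rw [hankelIntegral_hankelKernel, mul_left_comm, inv_mul_cancel_left₀ Complex.two_pi_I_ne_zero,
    add_comm 1]
  push_cast
  rw [div_eq_mul_inv]

end MittagLefflerKernel

section Folding

lemma image_inv_Ioo_zero_one : (fun q : ℝ => q⁻¹) '' Ioo 0 1 = Ioi 1 := by
  rw [Set.image_inv_eq_inv, inv_Ioo_0_left one_pos, inv_one]

lemma hasDerivWithinAt_inv_Ioo {q : ℝ} (hq : q ∈ Ioo (0 : ℝ) 1) :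
    HasDerivWithinAt (fun q : ℝ => q⁻¹) (-(q ^ 2)⁻¹) (Ioo 0 1) q :=
  (hasDerivAt_inv hq.1.ne').hasDerivWithinAt

lemma integral_Ioi_zero_eq_integral_Ioo_zero_one {g : ℝ → ℝ} (hg : IntegrableOn g (Ioi 0)) :
    ∫ q in Ioi 0, g q = ∫ q in Ioo 0 1, (g q + (q ^ 2)⁻¹ * g q⁻¹) := by
  have habs : ∀ q : ℝ, |-(q ^ 2)⁻¹| • g q⁻¹ = (q ^ 2)⁻¹ * g q⁻¹ := fun q => by
    rw [abs_neg, abs_of_nonneg (by positivity), smul_eq_mul]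
  have hleft : IntegrableOn g (Ioo 0 1) := hg.mono_set Ioo_subset_Ioi_self
  have hright : IntegrableOn g (Ioi 1) := hg.mono_set (Ioi_subset_Ioi zero_le_one)
  have hright' : IntegrableOn (fun q => (q ^ 2)⁻¹ * g q⁻¹) (Ioo 0 1) := by
    rw [← image_inv_Ioo_zero_one, integrableOn_image_iff_integrableOn_abs_deriv_smul
      measurableSet_Ioo (fun _ => hasDerivWithinAt_inv_Ioo) inv_injective.injOn] at hright
    simpa only [habs] using hright
  have hsubst : ∫ q in Ioi 1, g q = ∫ q in Ioo 0 1, (q ^ 2)⁻¹ * g q⁻¹ := by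
    rw [← image_inv_Ioo_zero_one, integral_image_eq_integral_abs_deriv_smul measurableSet_Ioo
      (fun _ => hasDerivWithinAt_inv_Ioo) inv_injective.injOn]
    simp_rw [habs]
  rw [integral_add hleft hright', ← hsubst, ← integral_Ioc_eq_integral_Ioo,
    ← setIntegral_union (Ioc_disjoint_Ioi le_rfl) measurableSet_Ioi
      (hg.mono_set Ioc_subset_Ioi_self) hright, Ioc_union_Ioi_eq_Ioi zero_le_one]

/-- The sum of `exp (-(x q) ^ s)` over a point `q` and its mirror image `1 / q`: the integrand on
`(0, 1)` that remains when `(0, ∞)` is folded along the symmetry of Lamperti's law. -/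
noncomputable def foldedExp (s x q : ℝ) : ℝ := exp (-(x * q) ^ s) + exp (-(x / q) ^ s)

theorem mittagLeffler_neg_eq_integral_foldedExp {ρ x : ℝ} (hρ : ρ ∈ Ioo 0 1) (hx : 0 < x) :
    mittagLeffler ρ (-x) =
      ∫ q in Ioo 0 1, foldedExp (1 / ρ) x q * lampertiDensity (π * ρ) q := by
  rw [mittagLeffler_neg_eq_integral_Ioi hρ hx, integral_Ioi_zero_eq_integral_Ioo_zero_one
    (integrableOn_exp_neg_div_rpow_mul_lampertiDensity hρ hx)]
  refine setIntegral_congr_fun measurableSet_Ioo fun q hq => ?_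
  have hq₀ : q ≠ 0 := hq.1.ne'
  rw [lampertiDensity_inv _ hq₀, div_inv_eq_mul, foldedExp]
  field_simp
  ring

end Folding

/-! ### Comparison of the densities -/

section LampertiDensityMass

variable {φ : ℝ}

lemma lampertiDensity_pos (hφ : φ ∈ Ioo 0 π) (q : ℝ) : 0 < lampertiDensity φ q := by
  rw [lampertiDensity, sinc_of_ne_zero hφ.1.ne']
  exact div_pos (div_pos (sin_pos_of_mem_Ioo hφ) hφ.1) (one_add_two_mul_mul_cos_add_sq_pos hφ q)

lemma continuous_lampertiDensity (hφ : φ ∈ Ioo 0 π) : Continuous (lampertiDensity φ) :=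
  Continuous.div (by fun_prop) (by fun_prop) fun q =>
    (one_add_two_mul_mul_cos_add_sq_pos hφ q).ne'

lemma integrableOn_lampertiDensity (hφ : φ ∈ Ioo 0 π) :
    IntegrableOn (lampertiDensity φ) (Ioo 0 1) :=
  (continuous_lampertiDensity hφ).integrableOn_Icc.mono_set Ioo_subset_Icc_self

lemma hasDerivAt_arctan_div_lampertiDensity (hφ : φ ∈ Ioo 0 π) (q : ℝ) :
    HasDerivAt (fun q => arctan ((q + cos φ) / sin φ) / φ) (lampertiDensity φ q) q := by
  have hsin := (sin_pos_of_mem_Ioo hφ).ne'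
  have hden : 1 + ((q + cos φ) / sin φ) ^ 2 = (1 + 2 * q * cos φ + q ^ 2) / sin φ ^ 2 := by
    field_simp
    linear_combination sin_sq_add_cos_sq φ
  refine (((((hasDerivAt_id q).add_const _).div_const _).arctan).div_const φ).congr_deriv ?_
  rw [id, hden, lampertiDensity, sinc_of_ne_zero hφ.1.ne']
  have hD := (one_add_two_mul_mul_cos_add_sq_pos hφ q).ne'
  field_simp

lemma arctan_cos_div_sin (hφ : φ ∈ Ioo 0 π) : arctan (cos φ / sin φ) = π / 2 - φ := by
  rw [← arctan_tan (x := π / 2 - φ) (by linarith [hφ.2]) (by linarith [hφ.1]),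
    tan_pi_div_two_sub, tan_eq_sin_div_cos, inv_div]

lemma arctan_one_add_cos_div_sin (hφ : φ ∈ Ioo 0 π) :
    arctan ((1 + cos φ) / sin φ) = π / 2 - φ / 2 := by
  have hφ' : φ / 2 ∈ Ioo 0 π := ⟨half_pos hφ.1, (half_lt_self hφ.1).trans hφ.2⟩
  have hhalf : (1 + cos φ) / sin φ = cos (φ / 2) / sin (φ / 2) := by
    have hsin := (sin_pos_of_mem_Ioo hφ').ne'
    rw [← mul_div_cancel₀ φ two_ne_zero, cos_two_mul, sin_two_mul]
    have hcos : cos (φ / 2) ≠ 0 := (cos_pos_of_mem_Ioo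
      ⟨by linarith [hφ'.1, pi_pos], by linarith [hφ.2]⟩).ne'
    field_simp
    ring
  rw [hhalf, arctan_cos_div_sin hφ']

lemma integral_lampertiDensity (hφ : φ ∈ Ioo 0 π) :
    ∫ q in Ioo 0 1, lampertiDensity φ q = 1 / 2 := by
  rw [← integral_Ioc_eq_integral_Ioo, ← intervalIntegral.integral_of_le zero_le_one,
    intervalIntegral.integral_eq_sub_of_hasDerivAt
      (fun q _ => hasDerivAt_arctan_div_lampertiDensity hφ q)
      ((continuous_lampertiDensity hφ).intervalIntegrable _ _),
    arctan_one_add_cos_div_sin hφ, zero_add, arctan_cos_div_sin hφ]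
  have hφ₀ := hφ.1.ne'
  field_simp
  ring

end LampertiDensityMass

section SincEstimates

variable {a b φ : ℝ}

lemma pow_three_div_le_sin_sub_mul_cos_of_le_pi_div_two (hφ : φ ∈ Icc 0 (π / 2)) :
    φ ^ 3 / 32 ≤ sin φ - φ * cos φ := by
  have hderiv : ∀ y : ℝ, HasDerivAt (fun y => sin y - y * cos y - y ^ 3 / 32)
      (y * sin y - 3 * y ^ 2 / 32) y := fun y => by
    refine (((hasDerivAt_sin y).sub ((hasDerivAt_id y).mul (hasDerivAt_cos y))).sub
      ((hasDerivAt_pow 3 y).div_const 32)).congr_deriv ?_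
    simp only [id]
    push_cast
    ring
  have hmono : MonotoneOn (fun y => sin y - y * cos y - y ^ 3 / 32) (Icc 0 (π / 2)) := by
    refine monotoneOn_of_hasDerivWithinAt_nonneg (convex_Icc _ _) (by fun_prop)
      (fun y _ => (hderiv y).hasDerivWithinAt) fun y hy => ?_
    rw [interior_Icc] at hy
    have hjordan : 1 / 4 * y ≤ sin y := by
      refine le_trans ?_ (mul_le_sin hy.1.le hy.2.le)
      refine mul_le_mul_of_nonneg_right ?_ hy.1.le
      rw [div_le_div_iff₀ (by norm_num) pi_pos]
      linarith [pi_lt_four]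
    nlinarith [hy.1]
  have hle := hmono (left_mem_Icc.2 (by positivity)) hφ hφ.1
  norm_num [sin_zero] at hle
  linarith

lemma pow_three_div_le_sin_sub_mul_cos (hφ : φ ∈ Ioo 0 π) :
    φ ^ 3 / 32 ≤ sin φ - φ * cos φ := by
  rcases le_total φ (π / 2) with h | h
  · exact pow_three_div_le_sin_sub_mul_cos_of_le_pi_div_two ⟨hφ.1.le, h⟩
  · have hcos : cos φ ≤ 0 := cos_nonpos_of_pi_div_two_le_of_le h (by linarith [hφ.2, pi_pos])
    have hone : 1 ≤ sin φ - cos φ := by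
      nlinarith [sin_pos_of_mem_Ioo hφ, sin_sq_add_cos_sq φ]
    have hcube : φ ^ 3 ≤ 32 := calc
      φ ^ 3 ≤ 3.15 ^ 3 := by
        gcongr
        · exact hφ.1.le
        · exact (hφ.2.trans pi_lt_d2).le
      _ ≤ 32 := by norm_num
    nlinarith [pi_gt_three]

lemma antitoneOn_sinc_add_sq_div : AntitoneOn (fun y => sinc y + y ^ 2 / 64) (Ioo 0 π) := by
  have hderiv : ∀ y ∈ Ioo 0 π, HasDerivAt (fun y => sinc y + y ^ 2 / 64)
      ((y * cos y - sin y) / y ^ 2 + y / 32) y := fun y hy => by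
    have hquot := ((hasDerivAt_sin y).div (hasDerivAt_id y) hy.1.ne').add
      ((hasDerivAt_pow 2 y).div_const 64)
    refine (hquot.congr_of_eventuallyEq ?_).congr_deriv ?_
    · filter_upwards [eventually_ne_nhds hy.1.ne'] with z hz
      simp [sinc_of_ne_zero hz]
    · simp only [id]
      push_cast
      ring
  refine antitoneOn_of_hasDerivWithinAt_nonpos (convex_Ioo _ _) (by fun_prop)
    (fun y hy => (hderiv y (interior_subset hy)).hasDerivWithinAt) fun y hy => ?_
  have hy' := interior_subset hy
  have hy₀ : 0 < y := hy'.1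
  rw [div_add' _ _ _ (by positivity)]
  exact div_nonpos_of_nonpos_of_nonneg
    (by linarith [pow_three_div_le_sin_sub_mul_cos hy']) (by positivity)

lemma sq_sub_sq_div_le_sinc_sub_sinc (ha : 0 < a) (hab : a ≤ b) (hb : b < π) :
    (b ^ 2 - a ^ 2) / 64 ≤ sinc a - sinc b := by
  have hle := antitoneOn_sinc_add_sq_div ⟨ha, hab.trans_lt hb⟩ ⟨ha.trans_le hab, hb⟩ hab
  linarith

lemma cos_sub_cos_le (ha : 0 ≤ a) (hab : a ≤ b) : cos a - cos b ≤ (b ^ 2 - a ^ 2) / 2 := by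
  have hmono : MonotoneOn (fun y => cos y + y ^ 2 / 2) (Ici 0) := by
    refine monotoneOn_of_hasDerivWithinAt_nonneg (f' := fun y => -sin y + y) (convex_Ici 0)
      (by fun_prop) (fun y _ => ?_) fun y hy => ?_
    · exact (((hasDerivAt_cos y).add ((hasDerivAt_pow 2 y).div_const 2)).congr_deriv
        (by simp)).hasDerivWithinAt
    · linarith [sin_le (interior_subset hy)]
  have hle := hmono ha (ha.trans hab) hab
  linarith

end SincEstimates

section DensityDifference

variable {a b q r : ℝ}

lemma lampertiDensity_sub (ha : a ∈ Ioo 0 π) (hb : b ∈ Ioo 0 π) (q : ℝ) :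
    lampertiDensity a q - lampertiDensity b q =
      ((sinc a - sinc b) * (1 + q ^ 2) + 2 * q * (sinc a * cos b - sinc b * cos a)) /
        ((1 + 2 * q * cos a + q ^ 2) * (1 + 2 * q * cos b + q ^ 2)) := by
  rw [lampertiDensity, lampertiDensity,
    div_sub_div _ _ (one_add_two_mul_mul_cos_add_sq_pos ha q).ne'
      (one_add_two_mul_mul_cos_add_sq_pos hb q).ne']
  ring

lemma lampertiDensity_le_of_le (ha : 0 < a) (hab : a ≤ b) (hb : b < π) (hq : 0 < q)
    (hqr : q ≤ r) (hr : r ≤ 1) (h : lampertiDensity b r ≤ lampertiDensity a r) :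
    lampertiDensity b q ≤ lampertiDensity a q := by
  have ha' : a ∈ Ioo 0 π := ⟨ha, hab.trans_lt hb⟩
  have hb' : b ∈ Ioo 0 π := ⟨ha.trans_le hab, hb⟩
  have hden : ∀ p, 0 < (1 + 2 * p * cos a + p ^ 2) * (1 + 2 * p * cos b + p ^ 2) := fun p =>
    mul_pos (one_add_two_mul_mul_cos_add_sq_pos ha' p) (one_add_two_mul_mul_cos_add_sq_pos hb' p)
  have hα : 0 ≤ sinc a - sinc b := by
    linarith [sq_sub_sq_div_le_sinc_sub_sinc ha hab hb, pow_le_pow_left₀ ha.le hab 2]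
  rw [← sub_nonneg, lampertiDensity_sub ha' hb'] at h ⊢
  rw [le_div_iff₀ (hden r), zero_mul] at h
  refine div_nonneg ?_ (hden q).le
  set α := sinc a - sinc b
  set β := sinc a * cos b - sinc b * cos a
  have hid : r * (α * (1 + q ^ 2) + 2 * q * β) =
      q * (α * (1 + r ^ 2) + 2 * r * β) + α * ((r - q) * (1 - r * q)) := by ring
  have hcorr : 0 ≤ (r - q) * (1 - r * q) := mul_nonneg (sub_nonneg.2 hqr) (by nlinarith)
  refine nonneg_of_mul_nonneg_right ?_ (hq.trans_le hqr)
  rw [hid]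
  positivity

lemma sq_sub_sq_div_le_lampertiDensity_sub (ha : 0 < a) (hab : a ≤ b) (hb : b < π)
    (hq : q ∈ Ioc 0 (1 / 200)) :
    (b ^ 2 - a ^ 2) / 200 ≤ lampertiDensity a q - lampertiDensity b q := by
  obtain ⟨hq₀, hq₁⟩ := hq
  have ha' : a ∈ Ioo 0 π := ⟨ha, hab.trans_lt hb⟩
  have hb' : b ∈ Ioo 0 π := ⟨ha.trans_le hab, hb⟩
  have hsq : 0 ≤ b ^ 2 - a ^ 2 := sub_nonneg.2 (pow_le_pow_left₀ ha.le hab 2)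
  have hupper : ∀ y, 1 + 2 * q * cos y + q ^ 2 ≤ 1.02 := fun y => by nlinarith [cos_le_one y]
  have hlower : 0.99 ≤ 1 + 2 * q * cos b + q ^ 2 := by nlinarith [neg_one_le_cos b]
  have hD := one_add_two_mul_mul_cos_add_sq_pos ha' q
  have hmain : (b ^ 2 - a ^ 2) / 64 * 0.99 ≤
      (sinc a - sinc b) * (1 + 2 * q * cos b + q ^ 2) := by
    have hsinc := sq_sub_sq_div_le_sinc_sub_sinc ha hab hb
    gcongr
    linarith
  have herror : 2 * q * (sinc b * (cos a - cos b)) ≤ 1 / 100 * ((b ^ 2 - a ^ 2) / 2) := by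
    have hcos : 0 ≤ cos a - cos b := sub_nonneg.2 (cos_le_cos_of_nonneg_of_le_pi ha.le hb.le hab)
    calc 2 * q * (sinc b * (cos a - cos b)) ≤ 2 * q * (1 * ((b ^ 2 - a ^ 2) / 2)) := by
          gcongr
          · exact sinc_le_one b
          · exact cos_sub_cos_le ha.le hab
      _ ≤ 1 / 100 * ((b ^ 2 - a ^ 2) / 2) := by nlinarith
  rw [lampertiDensity_sub ha' hb', le_div_iff₀ (by positivity)]
  calc (b ^ 2 - a ^ 2) / 200 * ((1 + 2 * q * cos a + q ^ 2) * (1 + 2 * q * cos b + q ^ 2))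
      ≤ (b ^ 2 - a ^ 2) / 200 * (1.02 * 1.02) := by gcongr <;> exact hupper _
    _ ≤ (sinc a - sinc b) * (1 + 2 * q * cos b + q ^ 2) -
          2 * q * (sinc b * (cos a - cos b)) := by linarith
    _ = _ := by ring

end DensityDifference

section SignChange

variable {V h : ℝ → ℝ} {c δ η : ℝ}

lemma exists_sign_change (hδ : δ ∈ Ioo 0 1)
    (hdown : ∀ q r, 0 < q → q ≤ r → r < 1 → 0 ≤ h r → 0 ≤ h q) (hδ₀ : 0 ≤ h δ) :
    ∃ s ∈ Icc δ 1, (∀ q ∈ Ioo 0 s, 0 ≤ h q) ∧ ∀ q ∈ Ioo s 1, h q ≤ 0 := by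
  set S := {q ∈ Ioo (0 : ℝ) 1 | 0 ≤ h q}
  have hδS : δ ∈ S := ⟨hδ, hδ₀⟩
  have hbdd : BddAbove S := ⟨1, fun q hq => hq.1.2.le⟩
  refine ⟨sSup S, ⟨le_csSup hbdd hδS, csSup_le ⟨δ, hδS⟩ fun q hq => hq.1.2.le⟩,
    fun q hq => ?_, fun q hq => ?_⟩
  · obtain ⟨r, hr, hqr⟩ := exists_lt_of_lt_csSup ⟨δ, hδS⟩ hq.2
    exact hdown q r hq.1 hqr.le hr.1.2 hr.2
  · by_contra! hpos
    have hq₀ : 0 < q := hδ.1.trans_le ((le_csSup hbdd hδS).trans hq.1.le)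
    exact notMem_of_csSup_lt hq.1 hbdd ⟨⟨hq₀, hq.2⟩, hpos.le⟩

lemma mul_le_integral_mul_of_sign_change (hV : AntitoneOn V (Ioc 0 1))
    (hh : IntegrableOn h (Ioo 0 1)) (hVh : IntegrableOn (fun q => V q * h q) (Ioo 0 1))
    (hmean : ∫ q in Ioo 0 1, h q = 0)
    (hdown : ∀ q r, 0 < q → q ≤ r → r < 1 → 0 ≤ h r → 0 ≤ h q) (hη : η ∈ Ioc 0 δ) (hδ : δ < 1)
    (hc : 0 ≤ c) (hch : ∀ q ∈ Ioc 0 δ, c ≤ h q) :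
    η * ((V η - V δ) * c) ≤ ∫ q in Ioo 0 1, V q * h q := by
  have hδ₀ : 0 < δ := hη.1.trans_le hη.2
  have hη₁ : η < 1 := hη.2.trans_lt hδ
  obtain ⟨s, hs, hpos, hneg⟩ :=
    exists_sign_change ⟨hδ₀, hδ⟩ hdown (hc.trans (hch δ ⟨hδ₀, le_rfl⟩))
  have hs' : s ∈ Ioc 0 1 := ⟨hδ₀.trans_le hs.1, hs.2⟩
  have hint : IntegrableOn (fun q => (V q - V s) * h q) (Ioo 0 1) := by
    simp_rw [sub_mul]
    exact hVh.sub (hh.const_mul _)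
  have hcenter : ∫ q in Ioo 0 1, V q * h q = ∫ q in Ioo 0 1, (V q - V s) * h q := by
    simp_rw [sub_mul]
    rw [integral_sub hVh (hh.const_mul _), integral_const_mul, hmean, mul_zero, sub_zero]
  have hnonneg : ∀ q ∈ Ioo (0 : ℝ) 1, 0 ≤ (V q - V s) * h q := fun q hq => by
    rcases lt_trichotomy q s with hlt | rfl | hgt
    · exact mul_nonneg (sub_nonneg.2 (hV ⟨hq.1, hq.2.le⟩ hs' hlt.le)) (hpos q ⟨hq.1, hlt⟩)
    · simp
    · exact mul_nonneg_of_nonpos_of_nonpos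
        (sub_nonpos.2 (hV hs' ⟨hq.1, hq.2.le⟩ hgt.le)) (hneg q ⟨hgt, hq.2⟩)
  have hsub : Ioo 0 η ⊆ Ioo 0 1 := Ioo_subset_Ioo_right hη₁.le
  rw [hcenter]
  calc η * ((V η - V δ) * c) = ∫ _ in Ioo 0 η, (V η - V δ) * c := by
        rw [setIntegral_const, smul_eq_mul, volume_real_Ioo_of_le hη.1.le, sub_zero]
    _ ≤ ∫ q in Ioo 0 η, (V q - V s) * h q := by
        refine setIntegral_mono_on (integrableOn_const measure_Ioo_lt_top.ne)
          (hint.mono_set hsub) measurableSet_Ioo fun q hq => ?_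
        have hη' : η ∈ Ioc 0 1 := ⟨hη.1, hη₁.le⟩
        have hδ' : δ ∈ Ioc 0 1 := ⟨hδ₀, hδ.le⟩
        have hVq : V η ≤ V q := hV ⟨hq.1, (hsub hq).2.le⟩ hη' hq.2.le
        have hVs : V s ≤ V δ := hV hδ' hs' hs.1
        have hVδ : V δ ≤ V η := hV hη' hδ' hη.2
        exact mul_le_mul (by linarith) (hch q ⟨hq.1, hq.2.le.trans hη.2⟩) hc (by linarith)
    _ ≤ ∫ q in Ioo 0 1, (V q - V s) * h q :=
        setIntegral_mono_set hint (ae_restrict_of_forall_mem measurableSet_Ioo hnonneg)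
          hsub.eventuallyLE

theorem mul_le_integral_mul_lampertiDensity_sub {a b : ℝ} (ha : 0 < a) (hab : a ≤ b) (hb : b < π)
    (hV : AntitoneOn V (Ioc 0 1)) (hη : η ∈ Ioc 0 (1 / 200))
    (hVa : IntegrableOn (fun q => V q * lampertiDensity a q) (Ioo 0 1))
    (hVb : IntegrableOn (fun q => V q * lampertiDensity b q) (Ioo 0 1)) :
    η * ((V η - V (1 / 200)) * ((b ^ 2 - a ^ 2) / 200)) ≤
      (∫ q in Ioo 0 1, V q * lampertiDensity a q) -
        ∫ q in Ioo 0 1, V q * lampertiDensity b q := by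
  have ha' : a ∈ Ioo 0 π := ⟨ha, hab.trans_lt hb⟩
  have hb' : b ∈ Ioo 0 π := ⟨ha.trans_le hab, hb⟩
  rw [← integral_sub hVa hVb]
  simp_rw [← mul_sub]
  refine mul_le_integral_mul_of_sign_change hV
    ((integrableOn_lampertiDensity ha').sub (integrableOn_lampertiDensity hb')) ?_ ?_
    (fun q r hq hqr hr hdiff => ?_) hη (by norm_num) ?_
    fun q hq => sq_sub_sq_div_le_lampertiDensity_sub ha hab hb hq
  · simp_rw [mul_sub]
    exact hVa.sub hVb
  · rw [integral_sub (integrableOn_lampertiDensity ha') (integrableOn_lampertiDensity hb'),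
      integral_lampertiDensity ha', integral_lampertiDensity hb', sub_self]
  · exact sub_nonneg.2 (lampertiDensity_le_of_le ha hab hb hq hqr hr.le (sub_nonneg.1 hdiff))
  · exact div_nonneg (sub_nonneg.2 (pow_le_pow_left₀ ha.le hab 2)) (by norm_num)

end SignChange

/-! ### Comparison of the kernels -/

section FoldedExp

variable {φ s t x q lam ρ : ℝ}

lemma foldedExp_nonneg (s x q : ℝ) : 0 ≤ foldedExp s x q :=
  add_nonneg (exp_pos _).le (exp_pos _).le

lemma foldedExp_le_two (s : ℝ) (hx : 0 ≤ x) (hq : 0 ≤ q) : foldedExp s x q ≤ 2 := by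
  have hmul : exp (-(x * q) ^ s) ≤ 1 :=
    exp_le_one_iff.2 (neg_nonpos.2 (rpow_nonneg (mul_nonneg hx hq) s))
  have hdiv : exp (-(x / q) ^ s) ≤ 1 :=
    exp_le_one_iff.2 (neg_nonpos.2 (rpow_nonneg (div_nonneg hx hq) s))
  rw [foldedExp]
  linarith

lemma integrableOn_foldedExp_mul_lampertiDensity (s : ℝ) (hx : 0 ≤ x) (hφ : φ ∈ Ioo 0 π) :
    IntegrableOn (fun q => foldedExp s x q * lampertiDensity φ q) (Ioo 0 1) := by
  refine (integrableOn_lampertiDensity hφ).bdd_mul (c := 2)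
    (Measurable.aestronglyMeasurable (by unfold foldedExp; fun_prop))
    (ae_restrict_of_forall_mem measurableSet_Ioo fun q hq => ?_)
  rw [norm_of_nonneg (foldedExp_nonneg s x q)]
  exact foldedExp_le_two s hx hq.1.le

lemma foldedExp_eq_foldedExp_one (s : ℝ) (hx : 0 ≤ x) (hq : 0 ≤ q) :
    foldedExp s x q = foldedExp 1 (x ^ s) (q ^ s) := by
  rw [foldedExp, foldedExp, rpow_one, rpow_one, mul_rpow hx hq, div_rpow hx hq]

lemma hasDerivAt_foldedExp_one (x : ℝ) (hq : q ≠ 0) :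
    HasDerivAt (foldedExp 1 x) (x * (exp (-(x / q)) / q ^ 2 - exp (-(x * q)))) q := by
  have heq : foldedExp 1 x = fun q => exp (-(x * q)) + exp (-(x * q⁻¹)) := by
    funext q
    rw [foldedExp, rpow_one, rpow_one, div_eq_mul_inv]
  rw [heq]
  refine (((hasDerivAt_id q).const_mul x).neg.exp.add
    ((hasDerivAt_inv hq).const_mul x).neg.exp).congr_deriv ?_
  simp only [id, div_eq_mul_inv, Pi.neg_apply]
  ring

lemma neg_two_mul_log_lt (hq : q ∈ Ioo 0 1) : -(2 * log q) < q⁻¹ - q := by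
  have hsinh := self_lt_sinh_iff.2 (neg_pos.2 (log_neg hq.1 hq.2))
  rw [sinh_eq, neg_neg, exp_neg, exp_log hq.1] at hsinh
  linarith

lemma exp_neg_div_lt_sq_mul_exp_neg_mul (hx : 1 ≤ x) (hq : q ∈ Ioo 0 1) :
    exp (-(x / q)) < q ^ 2 * exp (-(x * q)) := by
  have hinv : 0 ≤ q⁻¹ - q := sub_nonneg.2 (hq.2.le.trans (one_le_inv_iff₀.2 ⟨hq.1, hq.2.le⟩))
  have hsq : q ^ 2 = exp (2 * log q) := by
    rw [two_mul, exp_add, exp_log hq.1, sq]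
  rw [hsq, ← exp_add, exp_lt_exp, div_eq_mul_inv]
  nlinarith [neg_two_mul_log_lt hq]

lemma strictAntiOn_foldedExp_one (hx : 1 ≤ x) : StrictAntiOn (foldedExp 1 x) (Ioc 0 1) := by
  have hderiv := fun q (hq : q ∈ Ioc (0 : ℝ) 1) => hasDerivAt_foldedExp_one x hq.1.ne'
  refine strictAntiOn_of_hasDerivWithinAt_neg (convex_Ioc 0 1)
    (fun q hq => (hderiv q hq).continuousAt.continuousWithinAt)
    (fun q hq => (hderiv q (interior_subset hq)).hasDerivWithinAt) fun q hq => ?_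
  rw [interior_Ioc] at hq
  refine mul_neg_of_pos_of_neg (zero_lt_one.trans_le hx) (sub_neg.2 ?_)
  rw [div_lt_iff₀' (pow_pos hq.1 2)]
  exact exp_neg_div_lt_sq_mul_exp_neg_mul hx hq

lemma strictAntiOn_foldedExp (hs : 0 < s) (hx : 1 ≤ x) :
    StrictAntiOn (foldedExp s x) (Ioc 0 1) := fun q hq r hr hqr => by
  have hmem : ∀ p ∈ Ioc (0 : ℝ) 1, p ^ s ∈ Ioc (0 : ℝ) 1 := fun p hp =>
    ⟨rpow_pos_of_pos hp.1 s, rpow_le_one hp.1.le hp.2 hs.le⟩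
  have hx₀ : 0 ≤ x := zero_le_one.trans hx
  rw [foldedExp_eq_foldedExp_one s hx₀ hq.1.le, foldedExp_eq_foldedExp_one s hx₀ hr.1.le]
  exact strictAntiOn_foldedExp_one (one_le_rpow hx hs.le) (hmem q hq) (hmem r hr)
    (rpow_lt_rpow hq.1.le hqr hs)

lemma mul_rpow_rpow_one_div (hlam : 0 ≤ lam) (ht : 0 ≤ t) (hρ : ρ ≠ 0) :
    (lam * t ^ ρ) ^ (1 / ρ) = t * lam ^ (1 / ρ) := by
  rw [mul_rpow hlam (rpow_nonneg ht _), ← rpow_mul ht, mul_one_div_cancel hρ, rpow_one, mul_comm]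

lemma foldedExp_mul_rpow (hlam : 0 ≤ lam) (ht : 0 ≤ t) (hρ : ρ ≠ 0) (hq : 0 ≤ q) :
    foldedExp (1 / ρ) (lam * t ^ ρ) q =
      exp (-(t * (lam * q) ^ (1 / ρ))) + exp (-(t * (lam / q) ^ (1 / ρ))) := by
  rw [foldedExp, mul_right_comm, mul_rpow_rpow_one_div (mul_nonneg hlam hq) ht hρ,
    mul_div_right_comm, mul_rpow_rpow_one_div (div_nonneg hlam hq) ht hρ]

end FoldedExp

section Gain

variable {a b s x : ℝ}

lemma integral_foldedExp_mul_lampertiDensity_lt (ha : 0 < a) (hab : a < b) (hb : b < π)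
    (hs : 0 < s) (hx : 1 ≤ x) :
    ∫ q in Ioo 0 1, foldedExp s x q * lampertiDensity b q <
      ∫ q in Ioo 0 1, foldedExp s x q * lampertiDensity a q := by
  have hanti := strictAntiOn_foldedExp hs hx
  have hx₀ : 0 ≤ x := zero_le_one.trans hx
  have hgain := mul_le_integral_mul_lampertiDensity_sub (η := 1 / 400) ha hab.le hb
    hanti.antitoneOn (by norm_num)
    (integrableOn_foldedExp_mul_lampertiDensity s hx₀ ⟨ha, hab.trans hb⟩)
    (integrableOn_foldedExp_mul_lampertiDensity s hx₀ ⟨ha.trans hab, hb⟩)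
  have hdrop : 0 < foldedExp s x (1 / 400) - foldedExp s x (1 / 200) :=
    sub_pos.2 (hanti (by norm_num) (by norm_num) (by norm_num))
  have hsq : 0 < b ^ 2 - a ^ 2 := sub_pos.2 (pow_lt_pow_left₀ hab ha.le two_ne_zero)
  exact sub_pos.1 (lt_of_lt_of_le (by positivity) hgain)

lemma one_third_le_foldedExp_one_div (s : ℝ) (hx : x ≠ 0) : 1 / 3 ≤ foldedExp s x (1 / x) := by
  rw [foldedExp, mul_one_div_cancel hx, one_rpow]
  linarith [exp_neg_one_gt_d9, exp_pos (-(x / (1 / x)) ^ s)]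

lemma exp_neg_rpow_le_one_div (hs : 1 ≤ s) (hx : 1 ≤ x) : exp (-x ^ s) ≤ 1 / x := by
  rw [exp_neg, ← one_div]
  refine one_div_le_one_div_of_le (zero_lt_one.trans_le hx) ?_
  calc x ≤ x ^ s := self_le_rpow_of_one_le hx hs
    _ ≤ exp (x ^ s) := by linarith [add_one_le_exp (x ^ s)]

lemma foldedExp_one_div_two_hundred_le (hs : 1 ≤ s) (hx : 8000 ≤ x) :
    foldedExp s x (1 / 200) ≤ 1 / 12 := by
  have hbound : ∀ y : ℝ, 40 ≤ y → exp (-y ^ s) ≤ 1 / 40 := fun y hy =>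
    (exp_neg_rpow_le_one_div hs (by linarith)).trans (one_div_le_one_div_of_le (by norm_num) hy)
  have hmul := hbound (x * (1 / 200)) (by linarith)
  have hdiv := hbound (x / (1 / 200)) (by linarith)
  rw [foldedExp]
  linarith

lemma sq_sub_sq_div_le_integral_foldedExp_sub (ha : 0 < a) (hab : a ≤ b) (hb : b < π)
    (hs : 1 ≤ s) (hx : 8000 ≤ x) :
    (b ^ 2 - a ^ 2) / (800 * x) ≤
      (∫ q in Ioo 0 1, foldedExp s x q * lampertiDensity a q) -
        ∫ q in Ioo 0 1, foldedExp s x q * lampertiDensity b q := by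
  have hx₀ : 0 < x := by linarith
  have hη : 1 / x ∈ Ioc 0 (1 / 200) :=
    ⟨by positivity, one_div_le_one_div_of_le (by norm_num) (by linarith)⟩
  have hsq : 0 ≤ b ^ 2 - a ^ 2 := sub_nonneg.2 (pow_le_pow_left₀ ha.le hab 2)
  have hdrop : 1 / 4 ≤ foldedExp s x (1 / x) - foldedExp s x (1 / 200) := by
    linarith [one_third_le_foldedExp_one_div s hx₀.ne', foldedExp_one_div_two_hundred_le hs hx]
  calc (b ^ 2 - a ^ 2) / (800 * x) = 1 / x * (1 / 4 * ((b ^ 2 - a ^ 2) / 200)) := by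
        field_simp
        ring
    _ ≤ 1 / x * ((foldedExp s x (1 / x) - foldedExp s x (1 / 200)) *
          ((b ^ 2 - a ^ 2) / 200)) := by gcongr
    _ ≤ _ := mul_le_integral_mul_lampertiDensity_sub ha hab hb
        (strictAntiOn_foldedExp (by linarith) (by linarith)).antitoneOn hη
        (integrableOn_foldedExp_mul_lampertiDensity s hx₀.le ⟨ha, hab.trans_lt hb⟩)
        (integrableOn_foldedExp_mul_lampertiDensity s hx₀.le ⟨ha.trans_le hab, hb⟩)

end Gain

section Loss

variable {lam p q s s₁ s₂ t φ ρ₁ ρ₂ : ℝ}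

lemma foldedExp_le_foldedExp_of_le_one (hlam : 0 < lam) (hlam₁ : lam ≤ 1) (ht : 0 < t)
    (hρ₁ : 0 < ρ₁) (hρ : ρ₁ ≤ ρ₂) (hx : 1 ≤ lam * t ^ ρ₁) (hq : q ∈ Ioc 0 1) :
    foldedExp (1 / ρ₂) (lam * t ^ ρ₂) q ≤ foldedExp (1 / ρ₁) (lam * t ^ ρ₁) q := by
  have hρ₂ : 0 < ρ₂ := hρ₁.trans_le hρ
  have hs : 1 / ρ₂ ≤ 1 / ρ₁ := one_div_le_one_div_of_le hρ₁ hρ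
  have hbase : (lam * t ^ ρ₁) ^ (1 / ρ₁) ≤ (lam * t ^ ρ₂) ^ (1 / ρ₂) := by
    rw [mul_rpow_rpow_one_div hlam.le ht.le hρ₁.ne', mul_rpow_rpow_one_div hlam.le ht.le hρ₂.ne']
    exact mul_le_mul_of_nonneg_left (rpow_le_rpow_of_exponent_ge hlam hlam₁ hs) ht.le
  have hqpow : q ^ (1 / ρ₁) ≤ q ^ (1 / ρ₂) := rpow_le_rpow_of_exponent_ge hq.1 hq.2 hs
  have hqpow₁ : q ^ (1 / ρ₂) ≤ 1 := rpow_le_one hq.1.le hq.2 (by positivity)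
  rw [foldedExp_eq_foldedExp_one _ (by positivity) hq.1.le,
    foldedExp_eq_foldedExp_one _ (by positivity) hq.1.le]
  calc foldedExp 1 ((lam * t ^ ρ₂) ^ (1 / ρ₂)) (q ^ (1 / ρ₂))
      ≤ foldedExp 1 ((lam * t ^ ρ₁) ^ (1 / ρ₁)) (q ^ (1 / ρ₂)) := by
        have hqpos := rpow_pos_of_pos hq.1 (1 / ρ₂)
        simp only [foldedExp, rpow_one]
        gcongr
    _ ≤ foldedExp 1 ((lam * t ^ ρ₁) ^ (1 / ρ₁)) (q ^ (1 / ρ₁)) :=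
        (strictAntiOn_foldedExp_one (one_le_rpow hx (by positivity))).antitoneOn
          ⟨rpow_pos_of_pos hq.1 _, hqpow.trans hqpow₁⟩ ⟨rpow_pos_of_pos hq.1 _, hqpow₁⟩ hqpow

lemma sq_le_mul_exp_half {y : ℝ} (hy : 0 ≤ y) : y ^ 2 ≤ 8 * exp (y / 2) := by
  have hexp := quadratic_le_exp_of_nonneg (div_nonneg hy zero_le_two)
  nlinarith

lemma hasDerivAt_exp_neg_mul_rpow (t : ℝ) (hp : 0 < p) (s : ℝ) :
    HasDerivAt (fun s => -exp (-(t * p ^ s))) (t * (log p * p ^ s) * exp (-(t * p ^ s))) s := by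
  have hpow : HasDerivAt (fun s : ℝ => p ^ s) (log p * p ^ s) s := by
    simpa only [id, mul_one] using (hasDerivAt_id s).const_rpow hp
  exact (hpow.const_mul t).neg.exp.neg.congr_deriv (by simp only [Pi.neg_apply]; ring)

lemma mul_log_mul_rpow_mul_exp_le (hp : 1 ≤ p) (ht : 4 ≤ t) (hs : 1 ≤ s) :
    t * (log p * p ^ s) * exp (-(t * p ^ s)) ≤ 8 * exp (-t / 4) * exp (-p) := by
  have hpow : p ≤ p ^ s := self_le_rpow_of_one_le hp hs
  have hlog : log p ≤ p ^ s := (log_le_self (by linarith)).trans hpow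
  set y := p ^ s
  have hy : 1 ≤ y := hp.trans hpow
  calc t * (log p * y) * exp (-(t * y)) ≤ (t * y) ^ 2 * exp (-(t * y)) := by
        gcongr
        calc t * (log p * y) ≤ t * (y * y) := by gcongr
          _ ≤ (t * y) ^ 2 := by
            have ht₀ : 0 < t := by linarith
            nlinarith [mul_pos ht₀ (mul_pos (zero_lt_one.trans_le hy) (zero_lt_one.trans_le hy))]
    _ ≤ 8 * exp (t * y / 2) * exp (-(t * y)) := by
        gcongr
        exact sq_le_mul_exp_half (by positivity)
    _ = 8 * exp (-(t * y) / 2) := by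
        rw [mul_assoc, ← exp_add]
        ring_nf
    _ ≤ 8 * exp (-t / 4 + -p) := by
        gcongr
        nlinarith
    _ = 8 * exp (-t / 4) * exp (-p) := by rw [exp_add, mul_assoc]

lemma exp_neg_mul_rpow_sub_le (hp : 0 < p) (ht : 4 ≤ t) (hs₂ : 1 ≤ s₂) (hs : s₂ ≤ s₁) :
    exp (-(t * p ^ s₂)) - exp (-(t * p ^ s₁)) ≤ 8 * exp (-t / 4) * (s₁ - s₂) * exp (-p) := by
  rcases le_total p 1 with hp₁ | hp₁
  · have hpow : exp (-(t * p ^ s₂)) ≤ exp (-(t * p ^ s₁)) := by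
      have := rpow_le_rpow_of_exponent_ge hp hp₁ hs
      gcongr
    have hnonneg : 0 ≤ 8 * exp (-t / 4) * (s₁ - s₂) * exp (-p) := by
      have := sub_nonneg.2 hs
      positivity
    linarith
  · have hderiv := hasDerivAt_exp_neg_mul_rpow t hp
    have hmvt := (convex_Ici (1 : ℝ)).image_sub_le_mul_sub_of_deriv_le
      (fun s _ => (hderiv s).continuousAt.continuousWithinAt)
      (fun s _ => (hderiv s).differentiableAt.differentiableWithinAt)
      (fun s hs => (hderiv s).deriv.trans_le
        (mul_log_mul_rpow_mul_exp_le hp₁ ht (interior_subset hs))) s₂ hs₂ s₁ (hs₂.trans hs) hs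
    linarith

lemma foldedExp_sub_foldedExp_le (hlam : 0 < lam) (ht : 4 ≤ t) (hρ₁ : 0 < ρ₁) (hρ : ρ₁ ≤ ρ₂)
    (hρ₂ : ρ₂ ≤ 1) (hq : q ∈ Ioc 0 1) :
    foldedExp (1 / ρ₂) (lam * t ^ ρ₂) q - foldedExp (1 / ρ₁) (lam * t ^ ρ₁) q ≤
      16 * exp (-t / 4) * (1 / ρ₁ - 1 / ρ₂) * exp (-(lam * q)) := by
  have hρ₂₀ : 0 < ρ₂ := hρ₁.trans_le hρ
  have hs : 1 / ρ₂ ≤ 1 / ρ₁ := one_div_le_one_div_of_le hρ₁ hρ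
  have hs₂ : 1 ≤ 1 / ρ₂ := (one_le_div hρ₂₀).2 hρ₂
  have ht₀ : 0 ≤ t := by linarith
  have hmul := exp_neg_mul_rpow_sub_le (mul_pos hlam hq.1) ht hs₂ hs
  have hdiv := exp_neg_mul_rpow_sub_le (div_pos hlam hq.1) ht hs₂ hs
  have hdiv' : 8 * exp (-t / 4) * (1 / ρ₁ - 1 / ρ₂) * exp (-(lam / q)) ≤
      8 * exp (-t / 4) * (1 / ρ₁ - 1 / ρ₂) * exp (-(lam * q)) := by
    have hle : lam * q ≤ lam / q := by
      rw [le_div_iff₀ hq.1, mul_assoc]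
      exact mul_le_of_le_one_right hlam.le (mul_le_one₀ hq.2 hq.1.le hq.2)
    exact mul_le_mul_of_nonneg_left (exp_le_exp.2 (neg_le_neg hle))
      (mul_nonneg (by positivity) (sub_nonneg.2 hs))
  rw [foldedExp_mul_rpow hlam.le ht₀ hρ₁.ne' hq.1.le,
    foldedExp_mul_rpow hlam.le ht₀ hρ₂₀.ne' hq.1.le]
  linarith

lemma exp_neg_mul_mul_lampertiDensity_le (hlam : 0 < lam) (hφ : φ ∈ Ioo 0 π) (hq : 0 ≤ q) :
    exp (-(lam * q)) * lampertiDensity φ q ≤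
      4 * exp (-lam * q) + 1 / lam * lampertiDensity φ q := by
  have hdens := lampertiDensity_pos hφ q
  rw [← neg_mul]
  rcases le_total q (1 / 2) with h | h
  · have hle : lampertiDensity φ q ≤ 4 := by
      rw [lampertiDensity, div_le_iff₀ (one_add_two_mul_mul_cos_add_sq_pos hφ q)]
      nlinarith [neg_one_le_cos φ, sinc_le_one φ]
    nlinarith [exp_pos (-lam * q), mul_pos (one_div_pos.2 hlam) hdens]
  · have hle : exp (-lam * q) ≤ 1 / lam := by
      rw [neg_mul, exp_neg, ← one_div]
      exact one_div_le_one_div_of_le hlam (by nlinarith [two_mul_le_exp (x := lam * q)])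
    nlinarith [exp_pos (-lam * q)]

lemma integral_exp_neg_mul_Ioo_le (hlam : 0 < lam) : ∫ q in Ioo 0 1, exp (-lam * q) ≤ 1 / lam := by
  have hneg : -lam < 0 := neg_lt_zero.2 hlam
  calc ∫ q in Ioo 0 1, exp (-lam * q) ≤ ∫ q in Ioi 0, exp (-lam * q) :=
        setIntegral_mono_set (integrableOn_exp_mul_Ioi hneg 0)
          (ae_of_all _ fun q => (exp_pos _).le) Ioo_subset_Ioi_self.eventuallyLE
    _ = 1 / lam := by
        rw [integral_exp_mul_Ioi hneg, mul_zero, exp_zero, neg_div_neg_eq]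

lemma integrableOn_exp_neg_mul_mul_lampertiDensity (lam : ℝ) (hφ : φ ∈ Ioo 0 π) :
    IntegrableOn (fun q => exp (-(lam * q)) * lampertiDensity φ q) (Ioo 0 1) :=
  (Continuous.integrableOn_Icc (Continuous.mul (by fun_prop)
    (continuous_lampertiDensity hφ))).mono_set Ioo_subset_Icc_self

lemma integral_exp_neg_mul_mul_lampertiDensity_le (hlam : 0 < lam) (hφ : φ ∈ Ioo 0 π) :
    ∫ q in Ioo 0 1, exp (-(lam * q)) * lampertiDensity φ q ≤ 9 / (2 * lam) := by
  have hexp : IntegrableOn (fun q => 4 * exp (-lam * q)) (Ioo 0 1) :=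
    ((integrableOn_exp_mul_Ioi (neg_lt_zero.2 hlam) 0).mono_set Ioo_subset_Ioi_self).const_mul 4
  have hdens : IntegrableOn (fun q => 1 / lam * lampertiDensity φ q) (Ioo 0 1) :=
    (integrableOn_lampertiDensity hφ).const_mul _
  calc ∫ q in Ioo 0 1, exp (-(lam * q)) * lampertiDensity φ q
      ≤ ∫ q in Ioo 0 1, (4 * exp (-lam * q) + 1 / lam * lampertiDensity φ q) :=
        setIntegral_mono_on (integrableOn_exp_neg_mul_mul_lampertiDensity lam hφ)
          (hexp.add hdens) measurableSet_Ioo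
          fun q hq => exp_neg_mul_mul_lampertiDensity_le hlam hφ hq.1.le
    _ = 4 * (∫ q in Ioo 0 1, exp (-lam * q)) + 1 / lam * (1 / 2) := by
        rw [integral_add hexp hdens, integral_const_mul, integral_const_mul,
          integral_lampertiDensity hφ]
    _ ≤ 4 * (1 / lam) + 1 / lam * (1 / 2) := by
        gcongr
        exact integral_exp_neg_mul_Ioo_le hlam
    _ = 9 / (2 * lam) := by
        field_simp
        norm_num

lemma integral_foldedExp_mul_lampertiDensity_sub_le (hlam : 0 < lam) (ht : 4 ≤ t) (hρ₁ : 0 < ρ₁)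
    (hρ : ρ₁ ≤ ρ₂) (hρ₂ : ρ₂ ≤ 1) (hφ : φ ∈ Ioo 0 π) :
    (∫ q in Ioo 0 1, foldedExp (1 / ρ₂) (lam * t ^ ρ₂) q * lampertiDensity φ q) -
        ∫ q in Ioo 0 1, foldedExp (1 / ρ₁) (lam * t ^ ρ₁) q * lampertiDensity φ q ≤
      72 * exp (-t / 4) * (1 / ρ₁ - 1 / ρ₂) / lam := by
  have ht₀ : 0 ≤ t := by linarith
  have hint := fun ρ => integrableOn_foldedExp_mul_lampertiDensity (1 / ρ)
    (mul_nonneg hlam.le (rpow_nonneg ht₀ ρ)) hφ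
  have hM : 0 ≤ 16 * exp (-t / 4) * (1 / ρ₁ - 1 / ρ₂) := by
    have := sub_nonneg.2 (one_div_le_one_div_of_le hρ₁ hρ)
    positivity
  rw [← integral_sub (hint ρ₂) (hint ρ₁)]
  calc _ ≤ ∫ q in Ioo 0 1, 16 * exp (-t / 4) * (1 / ρ₁ - 1 / ρ₂) *
          (exp (-(lam * q)) * lampertiDensity φ q) := by
        refine setIntegral_mono_on ((hint ρ₂).sub (hint ρ₁))
          ((integrableOn_exp_neg_mul_mul_lampertiDensity lam hφ).const_mul _) measurableSet_Ioo
          fun q hq => ?_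
        rw [← sub_mul, ← mul_assoc]
        exact mul_le_mul_of_nonneg_right (foldedExp_sub_foldedExp_le hlam ht hρ₁ hρ hρ₂
          ⟨hq.1, hq.2.le⟩) (lampertiDensity_pos hφ q).le
    _ ≤ 16 * exp (-t / 4) * (1 / ρ₁ - 1 / ρ₂) * (9 / (2 * lam)) := by
        rw [integral_const_mul]
        gcongr
        exact integral_exp_neg_mul_mul_lampertiDensity_le hlam hφ
    _ = _ := by
        field_simp
        ring

end Loss

/-! ### Monotonicity in `ρ` -/

section Monotonicity

variable {lam lam₀ k t ρ ρ₁ ρ₂ : ℝ}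

lemma mittagLeffler_lt_of_le_one (hlam : 0 < lam) (hlam₁ : lam ≤ 1) (ht : 1 ≤ t) (hρ₁ : 0 < ρ₁)
    (hρ : ρ₁ < ρ₂) (hρ₂ : ρ₂ < 1) (hx : 1 ≤ lam * t ^ ρ₁) :
    mittagLeffler ρ₂ (-(lam * t ^ ρ₂)) < mittagLeffler ρ₁ (-(lam * t ^ ρ₁)) := by
  have ht₀ : 0 < t := zero_lt_one.trans_le ht
  have hρ₂₀ : 0 < ρ₂ := hρ₁.trans hρ
  have hφ : π * ρ₁ ∈ Ioo 0 π := pi_mul_mem_Ioo ⟨hρ₁, hρ.trans hρ₂⟩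
  have hψ : π * ρ₂ ∈ Ioo 0 π := pi_mul_mem_Ioo ⟨hρ₂₀, hρ₂⟩
  have hx₂ : 1 ≤ lam * t ^ ρ₂ :=
    hx.trans (mul_le_mul_of_nonneg_left (rpow_le_rpow_of_exponent_le ht hρ.le) hlam.le)
  rw [mittagLeffler_neg_eq_integral_foldedExp ⟨hρ₂₀, hρ₂⟩ (zero_lt_one.trans_le hx₂),
    mittagLeffler_neg_eq_integral_foldedExp ⟨hρ₁, hρ.trans hρ₂⟩ (zero_lt_one.trans_le hx)]
  calc ∫ q in Ioo 0 1, foldedExp (1 / ρ₂) (lam * t ^ ρ₂) q * lampertiDensity (π * ρ₂) q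
      < ∫ q in Ioo 0 1, foldedExp (1 / ρ₂) (lam * t ^ ρ₂) q * lampertiDensity (π * ρ₁) q :=
        integral_foldedExp_mul_lampertiDensity_lt hφ.1 (mul_lt_mul_of_pos_left hρ pi_pos) hψ.2
          (one_div_pos.2 hρ₂₀) hx₂
    _ ≤ ∫ q in Ioo 0 1, foldedExp (1 / ρ₁) (lam * t ^ ρ₁) q * lampertiDensity (π * ρ₁) q :=
        setIntegral_mono_on
          (integrableOn_foldedExp_mul_lampertiDensity _ (zero_le_one.trans hx₂) hφ)
          (integrableOn_foldedExp_mul_lampertiDensity _ (zero_le_one.trans hx) hφ)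
          measurableSet_Ioo fun q hq => mul_le_mul_of_nonneg_right
            (foldedExp_le_foldedExp_of_le_one hlam hlam₁ ht₀ hρ₁ hρ.le hx ⟨hq.1, hq.2.le⟩)
            (lampertiDensity_pos hφ q).le

lemma pow_four_mul_exp_neg_div_four_lt (ht : 8000 ≤ t) : 57600 * t ^ 4 * exp (-t / 4) < 18 := by
  have hexp : (t / 4) ^ 8 / 40320 ≤ exp (t / 4) := by
    simpa [Nat.factorial] using pow_div_factorial_le_exp (t / 4) (by linarith) 8
  have hpow : (8000 : ℝ) ^ 4 ≤ t ^ 4 := pow_le_pow_left₀ (by norm_num) ht 4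
  rw [neg_div, exp_neg, ← div_eq_mul_inv, div_lt_iff₀ (exp_pos _)]
  nlinarith [mul_le_mul_of_nonneg_left hpow (by positivity : 0 ≤ t ^ 4)]

lemma mul_exp_neg_div_four_lt (ht : 8000 ≤ t) (hρ₁ : 1 / t ≤ ρ₁) (hρ : ρ₁ ≤ ρ₂) :
    57600 * t * exp (-t / 4) < π ^ 2 * (ρ₁ + ρ₂) * (ρ₁ * ρ₂) := by
  have ht₀ : 0 < t := by linarith
  have hρ₁₀ : 0 < ρ₁ := (one_div_pos.2 ht₀).trans_le hρ₁
  calc 57600 * t * exp (-t / 4) = 57600 * t ^ 4 * exp (-t / 4) / t ^ 3 := by field_simp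
    _ < 18 / t ^ 3 := by
        gcongr
        exact pow_four_mul_exp_neg_div_four_lt ht
    _ = 3 ^ 2 * (1 / t + 1 / t) * (1 / t * (1 / t)) := by
        field_simp
        norm_num
    _ ≤ π ^ 2 * (ρ₁ + ρ₂) * (ρ₁ * ρ₂) := by
        have hρ₂ := hρ₁.trans hρ
        have hρ₂₀ := hρ₁₀.trans_le hρ
        have hπ := pi_gt_three.le
        gcongr

lemma exp_neg_div_four_mul_lt (hlam : 0 < lam) (ht : 8000 ≤ t) (hρ₁ : 1 / t ≤ ρ₁)
    (hρ : ρ₁ < ρ₂) :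
    72 * exp (-t / 4) * (1 / ρ₁ - 1 / ρ₂) / lam <
      ((π * ρ₂) ^ 2 - (π * ρ₁) ^ 2) / (800 * (lam * t)) := by
  have ht₀ : 0 < t := by linarith
  have hρ₁₀ : 0 < ρ₁ := (one_div_pos.2 ht₀).trans_le hρ₁
  have hρ₂₀ : 0 < ρ₂ := hρ₁₀.trans hρ
  have hsub : 0 < ρ₂ - ρ₁ := sub_pos.2 hρ
  calc 72 * exp (-t / 4) * (1 / ρ₁ - 1 / ρ₂) / lam
      = (ρ₂ - ρ₁) / (800 * lam * t * (ρ₁ * ρ₂)) * (57600 * t * exp (-t / 4)) := by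
        field_simp
        norm_num
    _ < (ρ₂ - ρ₁) / (800 * lam * t * (ρ₁ * ρ₂)) * (π ^ 2 * (ρ₁ + ρ₂) * (ρ₁ * ρ₂)) :=
        mul_lt_mul_of_pos_left (mul_exp_neg_div_four_lt ht hρ₁ hρ.le) (by positivity)
    _ = ((π * ρ₂) ^ 2 - (π * ρ₁) ^ 2) / (800 * (lam * t)) := by
        field_simp
        ring

lemma one_div_le_of_exp_one_le_rpow (ht : 0 < t) (hρ : 0 ≤ ρ) (h : exp 1 ≤ t ^ ρ) :
    1 / t ≤ ρ := by
  rw [div_le_iff₀ ht]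
  calc 1 ≤ log (t ^ ρ) := (le_log_iff_exp_le (by positivity)).2 h
    _ = ρ * log t := log_rpow ht ρ
    _ ≤ ρ * t := by gcongr; exact log_le_self ht.le

lemma mittagLeffler_lt_of_one_le (hlam : 1 ≤ lam) (ht : 1 ≤ t) (hρ₁ : 0 < ρ₁) (hρ : ρ₁ < ρ₂)
    (hρ₂ : ρ₂ < 1) (htρ : 8000 ≤ t ^ ρ₁) :
    mittagLeffler ρ₂ (-(lam * t ^ ρ₂)) < mittagLeffler ρ₁ (-(lam * t ^ ρ₁)) := by
  have hlam₀ : 0 < lam := zero_lt_one.trans_le hlam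
  have ht₀ : 0 < t := zero_lt_one.trans_le ht
  have hρ₂₀ : 0 < ρ₂ := hρ₁.trans hρ
  have hφ : π * ρ₁ ∈ Ioo 0 π := pi_mul_mem_Ioo ⟨hρ₁, hρ.trans hρ₂⟩
  have hψ : π * ρ₂ ∈ Ioo 0 π := pi_mul_mem_Ioo ⟨hρ₂₀, hρ₂⟩
  have hφψ : π * ρ₁ ≤ π * ρ₂ := mul_le_mul_of_nonneg_left hρ.le pi_pos.le
  have htρ₂ : 8000 ≤ t ^ ρ₂ := htρ.trans (rpow_le_rpow_of_exponent_le ht hρ.le)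
  have hle : t ^ ρ₂ ≤ t := rpow_le_self_of_one_le ht hρ₂.le
  have ht_large : 8000 ≤ t := htρ₂.trans hle
  have hgain := sq_sub_sq_div_le_integral_foldedExp_sub hφ.1 hφψ hψ.2
    ((one_le_div hρ₂₀).2 hρ₂.le) (htρ₂.trans (le_mul_of_one_le_left (by positivity) hlam))
  have hloss := integral_foldedExp_mul_lampertiDensity_sub_le hlam₀ (by linarith : 4 ≤ t) hρ₁
    hρ.le hρ₂.le hφ
  have hdom : 72 * exp (-t / 4) * (1 / ρ₁ - 1 / ρ₂) / lam <
      ((π * ρ₂) ^ 2 - (π * ρ₁) ^ 2) / (800 * (lam * t ^ ρ₂)) := by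
    have hinv : 1 / t ≤ ρ₁ :=
      one_div_le_of_exp_one_le_rpow ht₀ hρ₁.le (by linarith [exp_one_lt_d9])
    refine (exp_neg_div_four_mul_lt hlam₀ ht_large hinv hρ).trans_le ?_
    have hsq : 0 ≤ (π * ρ₂) ^ 2 - (π * ρ₁) ^ 2 :=
      sub_nonneg.2 (pow_le_pow_left₀ hφ.1.le hφψ 2)
    gcongr
  rw [mittagLeffler_neg_eq_integral_foldedExp ⟨hρ₂₀, hρ₂⟩ (by positivity),
    mittagLeffler_neg_eq_integral_foldedExp ⟨hρ₁, hρ.trans hρ₂⟩ (by positivity)]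
  linarith

lemma exp_mul_le_rpow_of_exp_le (hρ : 0 ≤ ρ) (ht : exp k ≤ t) : exp (ρ * k) ≤ t ^ ρ := by
  rw [mul_comm, exp_mul]
  exact rpow_le_rpow (exp_pos k).le ht hρ

lemma eight_thousand_le_exp_nine : 8000 ≤ exp 9 := by
  have hpow : exp 9 = exp 1 ^ 9 := by rw [← exp_nat_mul]; norm_num
  calc (8000 : ℝ) ≤ 2.718 ^ 9 := by norm_num
    _ ≤ exp 9 := hpow ▸ pow_le_pow_left₀ (by norm_num) (by linarith [exp_one_gt_d9]) 9

lemma one_le_mul_exp_of_log_le (hlam₀ : 0 < lam₀) (hlam : lam₀ ≤ lam) (hk : 1 ≤ k) {y : ℝ}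
    (hlog : log (2 * 4.6 * k / lam₀) ≤ y) : 1 ≤ lam * exp y := by
  have hexp : 2 * 4.6 * k / lam₀ ≤ exp y := (log_le_iff_le_exp (by positivity)).1 hlog
  rw [div_le_iff₀' hlam₀] at hexp
  calc 1 ≤ lam₀ * exp y := by linarith
    _ ≤ lam * exp y := by gcongr

lemma eight_thousand_le_rpow_and_one_le_mul_rpow (hρ : 0 < ρ) (hρ₁ : ρ ≤ 1) (hlam₀ : 0 < lam₀)
    (hlam : lam₀ ≤ lam) (ht : exp k ≤ t)
    (hk : 1 / ρ * max (43 / 4.6) (log (2 * 4.6 * k / lam₀)) ≤ k) :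
    8000 ≤ t ^ ρ ∧ 1 ≤ lam * t ^ ρ := by
  rw [one_div_mul_eq_div, div_le_iff₀' hρ, max_le_iff] at hk
  have hk₉ : 9 ≤ ρ * k := le_trans (by norm_num) hk.1
  have hexp : exp (ρ * k) ≤ t ^ ρ := exp_mul_le_rpow_of_exp_le hρ.le ht
  have hx : 1 ≤ lam * exp (ρ * k) := one_le_mul_exp_of_log_le hlam₀ hlam (by nlinarith) hk.2
  exact ⟨eight_thousand_le_exp_nine.trans ((exp_le_exp.2 hk₉).trans hexp),
    hx.trans (mul_le_mul_of_nonneg_left hexp (hlam₀.trans_le hlam).le)⟩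

end Monotonicity

theorem stmt2_general {ρ₀ lam t : ℝ} (hρ₀ : 0 < ρ₀) (ht : 0 < t) (htρ : 8000 ≤ t ^ ρ₀)
    (hx : 1 ≤ lam * t ^ ρ₀) :
    StrictAntiOn (fun ρ => mittagLeffler ρ (-(lam * t ^ ρ))) (Ico ρ₀ 1) := by
  rintro ρ₁ ⟨hρ₀₁, -⟩ ρ₂ ⟨-, hρ₂⟩ hρ
  have hρ₁ : 0 < ρ₁ := hρ₀.trans_le hρ₀₁
  have hlam : 0 < lam := pos_of_mul_pos_left (zero_lt_one.trans_le hx) (rpow_nonneg ht.le ρ₀)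
  have ht₁ : 1 < t := by
    by_contra! hle
    linarith [rpow_le_one ht.le hle hρ₀.le]
  have hmono : t ^ ρ₀ ≤ t ^ ρ₁ := rpow_le_rpow_of_exponent_le ht₁.le hρ₀₁
  rcases le_total lam 1 with hlam₁ | hlam₁
  · exact mittagLeffler_lt_of_le_one hlam hlam₁ ht₁.le hρ₁ hρ hρ₂
      (hx.trans (mul_le_mul_of_nonneg_left hmono hlam.le))
  · exact mittagLeffler_lt_of_one_le hlam₁ ht₁.le hρ₁ hρ hρ₂ (htρ.trans hmono)

/-- With `B₁ = 43`, `B₂ = 4.6`: if `k ≥ (1/ρ₀)·max{B₁/B₂, ln(2B₂k/λ₀)}`, then for every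
`t₀ ≥ e^k` and every `λ ≥ λ₀`, the function `ρ ↦ E_ρ(−λ t₀^ρ)` is strictly decreasing
on `[ρ₀, 1)`. -/
theorem stmt2 (ρ₀ lam₀ k : ℝ) (hρ₀ : 0 < ρ₀) (hρ₀' : ρ₀ < 1) (hlam₀ : 0 < lam₀)
    (hk : (1 / ρ₀) * max ((43 : ℝ) / 4.6) (Real.log (2 * 4.6 * k / lam₀)) ≤ k) :
    ∀ t₀ : ℝ, Real.exp k ≤ t₀ → ∀ lam : ℝ, lam₀ ≤ lam →
      StrictAntiOn (fun ρ : ℝ => mittagLeffler ρ (-(lam * t₀ ^ ρ))) (Set.Ico ρ₀ 1) := by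
  intro t₀ ht₀ lam hlam
  obtain ⟨htρ, hx⟩ :=
    eight_thousand_le_rpow_and_one_le_mul_rpow hρ₀ hρ₀'.le hlam₀ hlam ht₀ hk
  exact stmt2_general hρ₀ ((exp_pos k).trans_le ht₀) htρ hx
end

section
/- Let 0 < ρ₀ < 1, λ₀ > 0, and set B₁ = 43, B₂ = 4.6. If ρ₀ · λ₀ > 2B₁ · e^{−B₁/B₂} and 2 ≤ t₀ ≤ e^{B₁/B₂}, then for every λ ≥ λ₀ the function ρ ↦ E_ρ(−λ t₀^ρ) is strictly monotonically decreasing on the interval [ρ₀, 1). In particular, since 2B₁ e^{−B₁/B₂} < 0.0075, this holds whenever ρ₀ λ₀ > 0.0075 and t₀ = 2. -/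
open Set Real

/-!
Up to the factor `-λ`, the derivative of `E_ρ(-λ t ^ ρ)` in `ρ` is the derivative, at order `0`,
of the Riemann–Liouville integral at `t` of `φ(u) = u ^ ρ * E_ρ'(-λ u ^ ρ)`: both are obtained by
differentiating `a ↦ t ^ a / Γ(a + 1)` termwise. For `ρ ≤ 1` the function `x ↦ E_ρ(-x)` is
completely monotone, so `u ↦ E_ρ'(-λ u ^ ρ)` is positive and decreasing, and on `[0, t]` the
function `φ` dominates the multiple of `u ^ ρ` that agrees with it at `t`. The Riemann–Liouville
integrals of a power are explicit, and comparing derivatives at order `0` leaves the factor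
`log t - ψ(ρ + 1)`, where `ψ` is the digamma function. It is positive as soon as
`log t > ψ(2) = 1 - γ`.

The part of complete monotonicity that is needed, `E_ρ(-x)` decreasing and convex, follows from
Euler's formula `1 / Γ(a + 1) = lim N ^ (-a) * ∏ (1 + a / i)`: for `ρ ≤ 1` the polynomial
`∏ (1 + ρ * k / i)` in `k` is a nonnegative combination of the binomials `(k + j).choose j`, whose
alternating generating functions are `1 / (1 + x) ^ (j + 1)`.
-/

open Filter Topology MeasureTheory

theorem deriv_le_deriv_of_forall_gt_le {f g : ℝ → ℝ} {f' g' a : ℝ} (hf : HasDerivAt f f' a)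
    (hg : HasDerivAt g g' a) (heq : f a = g a) (hle : ∀ x > a, f x ≤ g x) : f' ≤ g' := by
  have hslope {h : ℝ → ℝ} {h' : ℝ} (hh : HasDerivAt h h' a) :
      Tendsto (slope h a) (𝓝[>] a) (𝓝 h') :=
    (hasDerivWithinAt_iff_tendsto_slope' (lt_irrefl a)).1 hh.hasDerivWithinAt
  refine le_of_tendsto_of_tendsto (hslope hf) (hslope hg) ?_
  filter_upwards [self_mem_nhdsWithin] with x (hx : a < x)
  rw [slope_def_field, slope_def_field, heq]
  have := sub_pos.2 hx
  gcongr
  exact hle x hx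

section Digamma

theorem differentiableAt_log_comp_Gamma {a : ℝ} (ha : 0 < a) :
    DifferentiableAt ℝ (log ∘ Gamma) a := by
  have hne (m : ℕ) : a ≠ -m := by have := m.cast_nonneg (α := ℝ); linarith
  exact (differentiableAt_Gamma hne).log (Gamma_ne_zero hne)

theorem deriv_log_comp_Gamma {a : ℝ} (ha : 0 < a) :
    deriv (log ∘ Gamma) a = logDeriv Gamma a := by
  have hne (m : ℕ) : a ≠ -m := by have := m.cast_nonneg (α := ℝ); linarith
  exact deriv.log (differentiableAt_Gamma hne) (Gamma_ne_zero hne)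

theorem monotoneOn_logDeriv_Gamma : MonotoneOn (logDeriv Gamma) (Ioi 0) :=
  (convexOn_log_Gamma.monotoneOn_deriv fun _ ↦ differentiableAt_log_comp_Gamma).congr
    fun _ ↦ deriv_log_comp_Gamma

theorem logDeriv_Gamma_le_log {a : ℝ} (ha : 0 < a) : logDeriv Gamma a ≤ log a := by
  have hslope := convexOn_log_Gamma.deriv_le_slope (x := a) (y := a + 1) ha
    (by simp only [mem_Ioi]; linarith) (by linarith) (differentiableAt_log_comp_Gamma ha)
  rw [deriv_log_comp_Gamma ha, slope_def_field, Function.comp_apply, Function.comp_apply,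
    Gamma_add_one ha.ne', log_mul ha.ne' (Gamma_pos_of_pos ha).ne'] at hslope
  simpa using hslope

theorem logDeriv_Gamma_one : logDeriv Gamma 1 = -eulerMascheroniConstant := by
  simp [logDeriv_apply, hasDerivAt_Gamma_one.deriv]

theorem logDeriv_Gamma_two : logDeriv Gamma 2 = 1 - eulerMascheroniConstant := by
  have h := deriv_Gamma_nat 1
  norm_num at h
  rw [logDeriv_apply, h, Gamma_two]
  ring

theorem abs_logDeriv_Gamma_add_one_le {a : ℝ} (ha : 0 ≤ a) :
    |logDeriv Gamma (a + 1)| ≤ 1 + a := by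
  have hupper : logDeriv Gamma (a + 1) ≤ log (a + 1) := logDeriv_Gamma_le_log (by linarith)
  have hlog : log (a + 1) ≤ a + 1 - 1 := log_le_sub_one_of_pos (by linarith)
  have hlower : logDeriv Gamma 1 ≤ logDeriv Gamma (a + 1) :=
    monotoneOn_logDeriv_Gamma (mem_Ioi.2 one_pos) (mem_Ioi.2 (by linarith)) (by linarith)
  rw [logDeriv_Gamma_one] at hlower
  exact abs_le.2 ⟨by linarith [eulerMascheroniConstant_lt_two_thirds], by linarith⟩

end Digamma

theorem exp_neg_mul_rpow_le_Gamma_add_one {a R : ℝ} (ha : 0 ≤ a) (hR : 0 ≤ R) :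
    exp (-R) * R ^ a ≤ Gamma (a + 1) := by
  have hint := GammaIntegral_convergent (s := a + 1) (by linarith)
  have hsub : Ioi R ⊆ Ioi 0 := Ioi_subset_Ioi hR
  calc exp (-R) * R ^ a
      = ∫ x in Ioi R, exp (-x) * R ^ a := by rw [integral_mul_const, integral_exp_neg_Ioi]
    _ ≤ ∫ x in Ioi R, exp (-x) * x ^ (a + 1 - 1) := by
        refine setIntegral_mono_on ((integrableOn_exp_neg_Ioi R).mul_const _)
          (hint.mono_set hsub) measurableSet_Ioi fun x (hx : R < x) ↦ ?_
        rw [add_sub_cancel_right]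
        gcongr
    _ ≤ ∫ x in Ioi 0, exp (-x) * x ^ (a + 1 - 1) := by
        refine setIntegral_mono_set hint ?_ hsub.eventuallyLE
        filter_upwards [ae_restrict_mem measurableSet_Ioi] with x hx
        exact mul_nonneg (exp_pos _).le (rpow_nonneg (le_of_lt hx) _)
    _ = Gamma (a + 1) := (Gamma_eq_integral (by linarith)).symm

/-- The normalised power `t ^ a / Γ(a + 1)`, extending the divided powers `t ^ n / n!` to real
exponents. It is the Riemann–Liouville integral of order `a` of the constant function `1`. -/
noncomputable def dividedRpow (t a : ℝ) : ℝ := t ^ a / Gamma (a + 1)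

section DividedRpow

variable {t a : ℝ}

theorem dividedRpow_nonneg (ht : 0 ≤ t) (ha : -1 < a) : 0 ≤ dividedRpow t a :=
  div_nonneg (rpow_nonneg ht a) (Gamma_pos_of_pos (by linarith)).le

theorem Gamma_mul_dividedRpow (t : ℝ) (ha : -1 < a) :
    Gamma (a + 1) * dividedRpow t a = t ^ a :=
  mul_div_cancel₀ _ (Gamma_pos_of_pos (by linarith)).ne'

theorem dividedRpow_mul_natCast (ht : 0 ≤ t) (ρ : ℝ) (k : ℕ) :
    dividedRpow t (ρ * k) = (t ^ ρ) ^ k / Gamma (ρ * k + 1) := by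
  rw [dividedRpow, rpow_mul ht, rpow_natCast]

theorem dividedRpow_le_exp_mul_rpow {R : ℝ} (ht : 0 ≤ t) (hR : 0 < R) (ha : 0 ≤ a) :
    dividedRpow t a ≤ exp R * (t / R) ^ a := by
  rw [dividedRpow, div_le_iff₀ (Gamma_pos_of_pos (by linarith))]
  calc t ^ a = exp R * (t / R) ^ a * (exp (-R) * R ^ a) := by
        have := (rpow_pos_of_pos hR a).ne'
        rw [div_rpow ht hR.le, exp_neg]
        field_simp
    _ ≤ exp R * (t / R) ^ a * Gamma (a + 1) := by
        gcongr
        exact exp_neg_mul_rpow_le_Gamma_add_one ha hR.le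

theorem exists_pow_mul_dividedRpow_le {σ L : ℝ} (hσ : 0 < σ) (hL : 0 ≤ L) (ht : 0 < t) :
    ∃ C, ∀ (k : ℕ) (a : ℝ), σ * k ≤ a → L ^ k * dividedRpow t a ≤ C * (1 / 2) ^ k := by
  obtain ⟨R, htR, hLR⟩ : ∃ R, t ≤ R ∧ L * (t / R) ^ σ < 1 / 2 := by
    have hlim : Tendsto (fun R ↦ L * (t / R) ^ σ) atTop (𝓝 (L * 0 ^ σ)) :=
      ((tendsto_const_nhds.div_atTop tendsto_id).rpow_const (.inr hσ.le)).const_mul L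
    rw [zero_rpow hσ.ne', mul_zero] at hlim
    exact ((eventually_ge_atTop t).and (hlim.eventually_lt_const (by norm_num))).exists
  have hR : 0 < R := ht.trans_le htR
  refine ⟨exp R, fun k a ha ↦ ?_⟩
  have ha0 : 0 ≤ a := le_trans (by positivity) ha
  calc L ^ k * dividedRpow t a
      ≤ L ^ k * (exp R * (t / R) ^ (σ * k)) := by
        gcongr
        refine (dividedRpow_le_exp_mul_rpow ht.le hR ha0).trans ?_
        gcongr ?_ * ?_
        exact rpow_le_rpow_of_exponent_ge (by positivity) ((div_le_one hR).2 htR) ha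
    _ = exp R * (L * (t / R) ^ σ) ^ k := by
        rw [rpow_mul (by positivity), rpow_natCast, mul_pow]
        ring
    _ ≤ exp R * (1 / 2) ^ k := by gcongr

theorem hasDerivAt_dividedRpow (ht : 0 < t) (ha : -1 < a) :
    HasDerivAt (dividedRpow t) (dividedRpow t a * (log t - logDeriv Gamma (a + 1))) a := by
  have hΓ : 0 < Gamma (a + 1) := Gamma_pos_of_pos (by linarith)
  have hΓ' : HasDerivAt Gamma (deriv Gamma (a + 1)) (a + 1) :=
    (differentiableAt_Gamma fun m ↦ by
      have := m.cast_nonneg (α := ℝ); linarith).hasDerivAt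
  refine ((hasStrictDerivAt_const_rpow ht a).hasDerivAt.div
    (hΓ'.comp_add_const a 1) hΓ.ne').congr_deriv ?_
  rw [dividedRpow, logDeriv_apply]
  field_simp

theorem deriv_dividedRpow (ht : 0 < t) (ha : -1 < a) :
    deriv (dividedRpow t) a = dividedRpow t a * (log t - logDeriv Gamma (a + 1)) :=
  (hasDerivAt_dividedRpow ht ha).deriv

theorem abs_deriv_dividedRpow_le (ht : 0 < t) (ha : 0 ≤ a) :
    |deriv (dividedRpow t) a| ≤ (|log t| + 1) * dividedRpow (exp 1 * t) a := by
  have hpos := dividedRpow_nonneg (a := a) ht.le (by linarith)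
  have hfactor : |log t - logDeriv Gamma (a + 1)| ≤ (|log t| + 1) * exp a :=
    calc |log t - logDeriv Gamma (a + 1)|
        ≤ |log t| + |logDeriv Gamma (a + 1)| := abs_sub _ _
      _ ≤ |log t| + (1 + a) := by gcongr; exact abs_logDeriv_Gamma_add_one_le ha
      _ ≤ (|log t| + 1) * (a + 1) := by nlinarith [abs_nonneg (log t)]
      _ ≤ (|log t| + 1) * exp a := by gcongr; exact add_one_le_exp a
  calc |deriv (dividedRpow t) a|
      = dividedRpow t a * |log t - logDeriv Gamma (a + 1)| := by
        rw [deriv_dividedRpow ht (by linarith), abs_mul, abs_of_nonneg hpos]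
    _ ≤ dividedRpow t a * ((|log t| + 1) * exp a) := by gcongr
    _ = (|log t| + 1) * dividedRpow (exp 1 * t) a := by
        rw [dividedRpow, dividedRpow, mul_rpow (exp_pos 1).le ht.le, exp_one_rpow]
        ring

/-- Euler's beta integral, read as a semigroup law for Riemann–Liouville integration. -/
theorem integral_dividedRpow_mul_rpow {ε : ℝ} (ht : 0 < t) (ha : -1 < a) (hε : 0 < ε) :
    ∫ u in 0..t, dividedRpow u a * (t - u) ^ (ε - 1) = Gamma ε * dividedRpow t (a + ε) := by
  have hbeta := Complex.betaIntegral_scaled ((a + 1 : ℝ) : ℂ) (ε : ℂ) ht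
  rw [Complex.betaIntegral_eq_Gamma_mul_div _ _ (by simp; linarith) (by simpa using hε)] at hbeta
  have hleft : ∫ x in 0..t, (x : ℂ) ^ (((a + 1 : ℝ) : ℂ) - 1) * ((t : ℂ) - x) ^ ((ε : ℂ) - 1) =
      ((∫ u in 0..t, u ^ a * (t - u) ^ (ε - 1) : ℝ) : ℂ) := by
    rw [← intervalIntegral.integral_ofReal]
    refine intervalIntegral.integral_congr fun u hu ↦ ?_
    rw [uIcc_of_le ht.le] at hu
    simp [Complex.ofReal_cpow hu.1, Complex.ofReal_cpow (sub_nonneg.2 hu.2)]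
  rw [hleft, show ((a + 1 : ℝ) : ℂ) + ε - 1 = ((a + ε : ℝ) : ℂ) by push_cast; ring,
    ← Complex.ofReal_add, Complex.Gamma_ofReal, Complex.Gamma_ofReal, Complex.Gamma_ofReal,
    ← Complex.ofReal_cpow ht.le] at hbeta
  have hreal : ∫ u in 0..t, u ^ a * (t - u) ^ (ε - 1) =
      t ^ (a + ε) * (Gamma (a + 1) * Gamma ε / Gamma (a + 1 + ε)) := by exact_mod_cast hbeta
  have hΓ : Gamma (a + 1) ≠ 0 := (Gamma_pos_of_pos (by linarith)).ne'
  simp_rw [dividedRpow, div_mul_eq_mul_div]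
  rw [intervalIntegral.integral_div, hreal, add_right_comm a 1 ε]
  field_simp

theorem intervalIntegrable_dividedRpow_mul_rpow {ε : ℝ} (ht : 0 < t) (ha : -1 < a) (hε : 0 < ε) :
    IntervalIntegrable (fun u ↦ dividedRpow u a * (t - u) ^ (ε - 1)) volume 0 t := by
  refine intervalIntegral.intervalIntegrable_of_integral_ne_zero ?_
  rw [integral_dividedRpow_mul_rpow ht ha hε]
  have hΓ : 0 < Gamma (a + ε + 1) := Gamma_pos_of_pos (by linarith)
  exact (mul_pos (Gamma_pos_of_pos hε) (div_pos (rpow_pos_of_pos ht _) hΓ)).ne'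

end DividedRpow

section Series

variable {c : ℕ → ℝ} {ρ L t : ℝ}

theorem summable_mul_dividedRpow {a : ℕ → ℝ} (hρ : 0 < ρ) (ht : 0 < t) (hc : ∀ k, |c k| ≤ L ^ k)
    (ha : ∀ k, ρ * k ≤ a k) : Summable fun k ↦ c k * dividedRpow t (a k) := by
  have hL : 0 ≤ L := by simpa using (abs_nonneg _).trans (hc 1)
  obtain ⟨C, hC⟩ := exists_pow_mul_dividedRpow_le hρ hL ht
  refine .of_norm_bounded (summable_geometric_two.mul_left C) fun k ↦ ?_
  have ha0 : 0 ≤ a k := le_trans (by positivity) (ha k)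
  have hg := dividedRpow_nonneg (a := a k) ht.le (by linarith)
  calc ‖c k * dividedRpow t (a k)‖ = |c k| * dividedRpow t (a k) := by
        rw [norm_mul, norm_of_nonneg hg, norm_eq_abs]
    _ ≤ L ^ k * dividedRpow t (a k) := by gcongr; exact hc k
    _ ≤ C * (1 / 2) ^ k := hC k _ (ha k)

theorem natCast_add_one_le_two_pow (k : ℕ) : (k : ℝ) + 1 ≤ 2 ^ k := by
  exact_mod_cast k.lt_two_pow_self

theorem exists_abs_mul_deriv_dividedRpow_mul_le {σ : ℝ} (hσ : 0 < σ) (hL : 0 ≤ L) (ht : 0 < t) :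
    ∃ C, ∀ (k : ℕ) (c q a : ℝ), |c| ≤ L ^ k → |q| ≤ k + 1 → σ * k ≤ a →
      |c * (deriv (dividedRpow t) a * q)| ≤ C * (1 / 2) ^ k := by
  have ht' : 0 < exp 1 * t := mul_pos (exp_pos 1) ht
  obtain ⟨C, hC⟩ := exists_pow_mul_dividedRpow_le hσ (mul_nonneg hL zero_le_two) ht'
  refine ⟨(|log t| + 1) * C, fun k c q a hc hq ha ↦ ?_⟩
  have ha0 : 0 ≤ a := le_trans (by positivity) ha
  have hg := dividedRpow_nonneg ht'.le (neg_one_lt_zero.trans_le ha0)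
  calc |c * (deriv (dividedRpow t) a * q)|
      = |c| * (|deriv (dividedRpow t) a| * |q|) := by rw [abs_mul, abs_mul]
    _ ≤ L ^ k * ((|log t| + 1) * dividedRpow (exp 1 * t) a * 2 ^ k) := by
        gcongr
        exacts [abs_deriv_dividedRpow_le ht ha0, hq.trans (natCast_add_one_le_two_pow k)]
    _ = (|log t| + 1) * ((L * 2) ^ k * dividedRpow (exp 1 * t) a) := by
        rw [mul_pow]
        ring
    _ ≤ (|log t| + 1) * (C * (1 / 2) ^ k) := by
        gcongr (|log t| + 1) * ?_
        exact hC k a ha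
    _ = (|log t| + 1) * C * (1 / 2) ^ k := (mul_assoc ..).symm

theorem hasDerivAt_tsum_mul_dividedRpow {q : ℕ → ℝ} (hρ : 0 < ρ) (ht : 0 < t)
    (hc : ∀ k, |c k| ≤ L ^ k) (hq : ∀ k, |q k| ≤ k + 1) :
    HasDerivAt (fun s ↦ ∑' k, c k * dividedRpow t (ρ * (k + 1) + q k * s))
      (∑' k, c k * (deriv (dividedRpow t) (ρ * (k + 1)) * q k)) 0 := by
  have hL : 0 ≤ L := by simpa using (abs_nonneg _).trans (hc 1)
  have hexp (k : ℕ) {s : ℝ} (hs : s ∈ Ioo (-(ρ / 2)) (ρ / 2)) :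
      ρ / 2 * k ≤ ρ * (k + 1) + q k * s := by
    have hqs : |q k * s| ≤ (k + 1) * (ρ / 2) := by
      rw [abs_mul]
      gcongr
      exacts [hq k, (abs_lt.2 hs).le]
    linarith [(abs_le.1 hqs).1]
  have hzero : (0 : ℝ) ∈ Ioo (-(ρ / 2)) (ρ / 2) := by simp [hρ]
  obtain ⟨C, hC⟩ := exists_abs_mul_deriv_dividedRpow_mul_le (half_pos hρ) hL ht
  have hderiv := hasDerivAt_tsum_of_isPreconnected (𝕜 := ℝ)
    (g := fun k s ↦ c k * dividedRpow t (ρ * (k + 1) + q k * s))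
    (g' := fun k s ↦ c k * (deriv (dividedRpow t) (ρ * (k + 1) + q k * s) * q k))
    (summable_geometric_two.mul_left C) isOpen_Ioo (convex_Ioo _ _).isPreconnected
    (fun k s hs ↦ ?_) (fun k s hs ↦ hC k _ _ _ (hc k) (hq k) (hexp k hs)) hzero
    (summable_mul_dividedRpow (half_pos hρ) ht hc fun k ↦ hexp k hzero) hzero
  · simpa using hderiv
  · have hinner : HasDerivAt (fun s ↦ ρ * (k + 1) + q k * s) (q k) s := by
      simpa using ((hasDerivAt_id s).const_mul (q k)).const_add (ρ * (k + 1))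
    have houter := hasDerivAt_dividedRpow ht
      (neg_one_lt_zero.trans_le (le_trans (by positivity) (hexp k hs)))
    exact (houter.differentiableAt.hasDerivAt.comp s hinner).const_mul (c k)

theorem integral_tsum_mul_dividedRpow_mul_rpow {a : ℕ → ℝ} {ε : ℝ} (hρ : 0 < ρ) (ht : 0 < t)
    (hε : 0 < ε) (hc : ∀ k, |c k| ≤ L ^ k) (ha : ∀ k, ρ * k ≤ a k) :
    ∫ u in 0..t, (∑' k, c k * dividedRpow u (a k)) * (t - u) ^ (ε - 1) =
      Gamma ε * ∑' k, c k * dividedRpow t (a k + ε) := by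
  have ha' (k : ℕ) : -1 < a k := neg_one_lt_zero.trans_le (le_trans (by positivity) (ha k))
  have hterm (b : ℝ) (k : ℕ) :
      ∫ u in 0..t, b * (dividedRpow u (a k) * (t - u) ^ (ε - 1)) =
        Gamma ε * (b * dividedRpow t (a k + ε)) := by
    rw [intervalIntegral.integral_const_mul, integral_dividedRpow_mul_rpow ht (ha' k) hε]
    ring
  have hnorm (k : ℕ) :
      ∫ u in Ioc 0 t, ‖c k * (dividedRpow u (a k) * (t - u) ^ (ε - 1))‖ =
        Gamma ε * (|c k| * dividedRpow t (a k + ε)) := by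
    rw [← hterm, intervalIntegral.integral_of_le ht.le]
    refine setIntegral_congr_fun measurableSet_Ioc fun u hu ↦ ?_
    have hnonneg : 0 ≤ dividedRpow u (a k) * (t - u) ^ (ε - 1) :=
      mul_nonneg (dividedRpow_nonneg hu.1.le (ha' k)) (rpow_nonneg (sub_nonneg.2 hu.2) _)
    rw [norm_mul, norm_of_nonneg hnonneg, norm_eq_abs]
  have hsum := hasSum_integral_of_summable_integral_norm
    (fun k ↦ ((intervalIntegrable_dividedRpow_mul_rpow ht (ha' k) hε).const_mul (c k)).1) <| by
      simp_rw [hnorm]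
      refine (summable_mul_dividedRpow (L := L) hρ ht (fun k ↦ ?_) fun k ↦ ?_).mul_left _
      · rw [abs_abs]
        exact hc k
      · linarith [ha k]
  simp_rw [← tsum_mul_left, ← tsum_mul_right, mul_assoc, ← hterm,
    intervalIntegral.integral_of_le ht.le]
  exact hsum.tsum_eq.symm

end Series

section MittagLeffler

variable {ρ : ℝ}

theorem hasFPowerSeriesOnBall_mittagLeffler (hρ : 0 < ρ) :
    HasFPowerSeriesOnBall (mittagLeffler ρ)
      (.ofScalars ℝ fun k : ℕ ↦ (Gamma (ρ * k + 1))⁻¹) 0 ⊤ := by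
  set p : FormalMultilinearSeries ℝ ℝ ℝ := .ofScalars ℝ fun k : ℕ ↦ (Gamma (ρ * k + 1))⁻¹
  have hradius : p.radius = ⊤ := by
    refine p.radius_eq_top_of_summable_norm fun r ↦ ?_
    refine (summable_mul_dividedRpow (c := fun k ↦ (r : ℝ) ^ k) (L := r) hρ one_pos
      (fun k ↦ by simp) fun k ↦ le_rfl).congr fun k ↦ ?_
    have hΓ : 0 < Gamma (ρ * k + 1) := Gamma_pos_of_pos (by positivity)
    rw [FormalMultilinearSeries.ofScalars_norm, norm_inv, norm_of_nonneg hΓ.le, dividedRpow,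
      one_rpow, one_div, mul_comm]
  have hsum : p.sum = mittagLeffler ρ := by
    ext z
    simp [p, FormalMultilinearSeries.sum, mittagLeffler, div_eq_mul_inv]
  simpa only [hsum, hradius] using p.hasFPowerSeriesOnBall (by simp [hradius])

theorem analyticOnNhd_mittagLeffler (hρ : 0 < ρ) : AnalyticOnNhd ℝ (mittagLeffler ρ) univ := by
  simpa using (hasFPowerSeriesOnBall_mittagLeffler hρ).analyticOnNhd

theorem deriv_mittagLeffler (hρ : 0 < ρ) (z : ℝ) :
    deriv (mittagLeffler ρ) z = ∑' k : ℕ, (k + 1) * z ^ k / Gamma (ρ * (k + 1) + 1) := by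
  have hsum := ((hasFPowerSeriesOnBall_mittagLeffler hρ).fderiv.hasSum (y := z) (by simp)).mapL
    (ContinuousLinearMap.apply ℝ ℝ (1 : ℝ))
  simp only [FormalMultilinearSeries.apply_eq_pow_smul_coeff, zero_add, map_smul,
    ContinuousLinearMap.apply_apply, FormalMultilinearSeries.derivSeries_coeff_one,
    FormalMultilinearSeries.coeff_ofScalars, fderiv_apply_one_eq_deriv] at hsum
  rw [← hsum.tsum_eq]
  refine tsum_congr fun k ↦ ?_
  simp only [nsmul_eq_mul, smul_eq_mul, Nat.cast_add, Nat.cast_one]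
  ring

theorem hasDerivAt_mittagLeffler_neg (hρ : 0 < ρ) (x : ℝ) :
    HasDerivAt (fun x ↦ mittagLeffler ρ (-x)) (-deriv (mittagLeffler ρ) (-x)) x := by
  have hderiv := (analyticOnNhd_mittagLeffler hρ (-x) trivial).differentiableAt.hasDerivAt
  simpa using! hderiv.comp x (hasDerivAt_neg x)

theorem mittagLeffler_neg_mul_rpow {t : ℝ} (hρ : 0 < ρ) (ht : 0 < t) (lam : ℝ) :
    mittagLeffler ρ (-(lam * t ^ ρ)) =
      1 - lam * ∑' k : ℕ, (-lam) ^ k * dividedRpow t (ρ * (k + 1)) := by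
  have hterm (k : ℕ) : (-(lam * t ^ ρ)) ^ k / Gamma (ρ * k + 1) =
      (-lam) ^ k * dividedRpow t (ρ * k) := by
    rw [dividedRpow_mul_natCast ht.le, ← neg_mul, mul_pow, mul_div_assoc]
  have hsum : Summable fun k : ℕ ↦ (-lam) ^ k * dividedRpow t (ρ * k) :=
    summable_mul_dividedRpow hρ ht (fun k ↦ (abs_pow _ k).le) fun _ ↦ le_rfl
  simp_rw [mittagLeffler, hterm]
  rw [hsum.tsum_eq_zero_add, ← tsum_mul_left, sub_eq_add_neg, ← tsum_neg]
  congr 1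
  · simp [dividedRpow]
  · refine tsum_congr fun k ↦ ?_
    push_cast
    ring

theorem rpow_mul_deriv_mittagLeffler_neg_mul_rpow {t : ℝ} (hρ : 0 < ρ) (ht : 0 ≤ t) (lam : ℝ) :
    t ^ ρ * deriv (mittagLeffler ρ) (-(lam * t ^ ρ)) =
      ∑' k : ℕ, (k + 1) * (-lam) ^ k * dividedRpow t (ρ * (k + 1)) := by
  rw [deriv_mittagLeffler hρ, ← tsum_mul_left]
  refine tsum_congr fun k ↦ ?_
  have hg := dividedRpow_mul_natCast ht ρ (k + 1)
  push_cast at hg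
  rw [hg, ← neg_mul, mul_pow, pow_succ]
  ring

end MittagLeffler

section EulerProduct

/-- The product `∏ (1 + a / i)` over `1 ≤ i ≤ N` of Euler's formula
`Γ(a + 1) = lim N ^ a / ∏ (1 + a / i)`, indexed from `0`. -/
noncomputable def eulerProd (N : ℕ) (a : ℝ) : ℝ := ∏ i ∈ Finset.range N, (1 + a / (i + 1))

theorem eulerProd_succ (N : ℕ) (a : ℝ) :
    eulerProd (N + 1) a = eulerProd N a * (1 + a / (N + 1)) := Finset.prod_range_succ ..

theorem eulerProd_pos {a : ℝ} (ha : 0 ≤ a) (N : ℕ) : 0 < eulerProd N a :=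
  Finset.prod_pos fun _ _ ↦ by positivity

theorem GammaSeq_eq_rpow_div_eulerProd {a : ℝ} (ha : 0 < a) (N : ℕ) :
    GammaSeq a N = N ^ a / (a * eulerProd N a) := by
  have hprod : ∏ i ∈ Finset.range N, (a + ((i + 1 : ℕ) : ℝ)) = N.factorial * eulerProd N a := by
    rw [← Finset.prod_range_add_one_eq_factorial, eulerProd, Nat.cast_prod,
      ← Finset.prod_mul_distrib]
    refine Finset.prod_congr rfl fun i _ ↦ ?_
    push_cast
    field_simp
    ring
  rw [GammaSeq, Finset.prod_range_succ', hprod, Nat.cast_zero, add_zero]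
  have hpos := eulerProd_pos ha.le N
  field_simp

theorem tendsto_eulerProd_div_rpow {a : ℝ} (ha : 0 ≤ a) :
    Tendsto (fun N : ℕ ↦ eulerProd N a / N ^ a) atTop (𝓝 (Gamma (a + 1))⁻¹) := by
  rcases ha.eq_or_lt with rfl | ha
  · simp [eulerProd]
  rw [Gamma_add_one ha.ne']
  refine (((GammaSeq_tendsto_Gamma a).const_mul a).inv₀
    (mul_pos ha (Gamma_pos_of_pos ha)).ne').congr fun N ↦ ?_
  rw [GammaSeq_eq_rpow_div_eulerProd ha]
  field_simp

theorem antitoneOn_eulerProd_div_rpow {a : ℝ} (ha : 0 ≤ a) :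
    AntitoneOn (fun N : ℕ ↦ eulerProd N a / N ^ a) (Ici 1) := by
  refine antitoneOn_nat_Ici_of_succ_le fun N hN ↦ ?_
  have hN0 : (0 : ℝ) < N := by exact_mod_cast hN
  have hfactor : 1 + a / (N + 1) ≤ (((N : ℝ) + 1) / N) ^ a :=
    calc 1 + a / (N + 1) = (1 - (((N : ℝ) + 1) / N)⁻¹) * a + 1 := by
          field_simp
          ring
      _ ≤ log (((N : ℝ) + 1) / N) * a + 1 := by
          gcongr
          exact one_sub_inv_le_log_of_pos (by positivity)
      _ ≤ (((N : ℝ) + 1) / N) ^ a := by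
          rw [rpow_def_of_pos (by positivity)]
          exact add_one_le_exp _
  rw [div_rpow (by positivity) hN0.le, le_div_iff₀ (by positivity)] at hfactor
  rw [eulerProd_succ, Nat.cast_add_one, div_le_div_iff₀ (by positivity) (by positivity), mul_assoc]
  gcongr
  exact (eulerProd_pos ha N).le

end EulerProduct

section CompleteMonotonicity

/-- The convex cone spanned by the sequences `k ↦ (k + j).choose j` with `j ≤ N`. They are the
coefficients of `(1 - z)⁻¹ ^ (j + 1)`, so the alternating generating function `∑ f k * (-x) ^ k` of
a member `f` is completely monotone. -/
noncomputable def chooseCone (N : ℕ) : PointedCone ℝ (ℕ → ℝ) :=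
  PointedCone.hull ℝ ((fun j k ↦ ((k + j).choose j : ℝ)) '' Iic N)

theorem choose_mem_chooseCone {j N : ℕ} (hj : j ≤ N) :
    (fun k ↦ ((k + j).choose j : ℝ)) ∈ chooseCone N :=
  PointedCone.subset_hull (mem_image_of_mem _ hj)

theorem mul_mem_chooseCone {α : ℝ} (hα0 : 0 ≤ α) (hα1 : α ≤ 1) {N : ℕ} {f : ℕ → ℝ}
    (hf : f ∈ chooseCone N) :
    (fun k ↦ f k * (1 + α * k / (N + 1))) ∈ chooseCone (N + 1) := by
  induction hf using Submodule.span_induction with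
  | mem f hf =>
    obtain ⟨j, hj : j ≤ N, rfl⟩ := hf
    set β : ℝ := α * (j + 1) / (N + 1)
    have hβ0 : 0 ≤ β := by positivity
    have hβ1 : β ≤ 1 := by
      rw [div_le_one (by positivity)]
      have : (j : ℝ) ≤ N := by exact_mod_cast hj
      nlinarith
    have hchoose (k : ℕ) : ((k + j).choose j : ℝ) * (1 + α * k / (N + 1)) =
        (1 - β) * (k + j).choose j + β * (k + (j + 1)).choose (j + 1) := by
      have hpascal : ((k : ℝ) + j + 1) * (k + j).choose j =
          (k + (j + 1)).choose (j + 1) * (j + 1) := by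
        exact_mod_cast Nat.add_one_mul_choose_eq (k + j) j
      simp only [β]
      field_simp
      linear_combination α * hpascal
    simp only [hchoose]
    exact add_mem
      ((chooseCone (N + 1)).smul_mem (sub_nonneg.2 hβ1) (choose_mem_chooseCone (by omega)))
      ((chooseCone (N + 1)).smul_mem hβ0 (choose_mem_chooseCone (by omega)))
  | zero => simpa only [Pi.zero_apply, zero_mul] using! (chooseCone (N + 1)).zero_mem
  | add f g _ _ hf hg => simpa only [Pi.add_apply, add_mul] using! add_mem hf hg
  | smul r f _ hf =>
    simpa only [Pi.smul_apply, smul_mul_assoc] using! (chooseCone (N + 1)).smul_mem r.2 hf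

theorem eulerProd_mul_mem_chooseCone {α : ℝ} (hα0 : 0 ≤ α) (hα1 : α ≤ 1) (N : ℕ) :
    (fun k : ℕ ↦ eulerProd N (α * k)) ∈ chooseCone N := by
  induction N with
  | zero => simpa [eulerProd] using choose_mem_chooseCone (le_refl 0)
  | succ N ih => simpa only [eulerProd_succ] using mul_mem_chooseCone hα0 hα1 ih

theorem convexOn_inv_one_add_pow (n : ℕ) :
    ConvexOn ℝ (Ioi (-1)) fun x : ℝ ↦ ((1 + x) ^ n)⁻¹ := by
  simpa [Function.comp_def] using (convexOn_zpow (𝕜 := ℝ) (-n)).translate_right 1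

theorem antitoneOn_inv_one_add_pow (n : ℕ) :
    AntitoneOn (fun x : ℝ ↦ ((1 + x) ^ n)⁻¹) (Ioi (-1)) := by
  intro x hx y _ hxy
  have : 0 < 1 + x := by linarith [mem_Ioi.1 hx]
  dsimp only
  gcongr

theorem exists_convexOn_antitoneOn_hasSum {N : ℕ} {f : ℕ → ℝ} (hf : f ∈ chooseCone N) :
    ∃ F : ℝ → ℝ, ConvexOn ℝ (Ioi (-1)) F ∧ AntitoneOn F (Ioi (-1)) ∧
      ∀ z, |z| < 1 → HasSum (fun k ↦ f k * z ^ k) (F (-z)) := by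
  induction hf using Submodule.span_induction with
  | mem f hf =>
    obtain ⟨j, -, rfl⟩ := hf
    refine ⟨_, convexOn_inv_one_add_pow (j + 1), antitoneOn_inv_one_add_pow (j + 1),
      fun z hz ↦ ?_⟩
    rw [← sub_eq_add_neg, ← one_div]
    exact hasSum_choose_mul_geometric_of_norm_lt_one j hz
  | zero => exact ⟨0, convexOn_const 0 (convex_Ioi _), antitoneOn_const, fun z _ ↦ by simp⟩
  | add f g _ _ hf hg =>
    obtain ⟨F, hFconv, hFanti, hFsum⟩ := hf
    obtain ⟨G, hGconv, hGanti, hGsum⟩ := hg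
    refine ⟨F + G, hFconv.add hGconv, hFanti.add hGanti, fun z hz ↦ ?_⟩
    simpa only [Pi.add_apply, add_mul] using (hFsum z hz).add (hGsum z hz)
  | smul r f _ hf =>
    obtain ⟨F, hFconv, hFanti, hFsum⟩ := hf
    refine ⟨fun x ↦ r * F x, hFconv.smul r.2, fun x hx y hy hxy ↦ ?_, fun z hz ↦ ?_⟩
    · exact mul_le_mul_of_nonneg_left (hFanti hx hy hxy) r.2
    · simpa only [← mul_assoc] using! (hFsum z hz).mul_left (r : ℝ)

theorem summable_mul_pow_of_mem_chooseCone {N : ℕ} {f : ℕ → ℝ} (hf : f ∈ chooseCone N) {z : ℝ}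
    (hz : |z| < 1) : Summable fun k ↦ f k * z ^ k :=
  let ⟨_, _, _, hsum⟩ := exists_convexOn_antitoneOn_hasSum hf
  (hsum z hz).summable

variable {ρ x : ℝ}

theorem tendsto_natCast_rpow_atTop (hρ : 0 < ρ) :
    Tendsto (fun N : ℕ ↦ (N : ℝ) ^ ρ) atTop atTop :=
  (tendsto_rpow_atTop hρ).comp tendsto_natCast_atTop_atTop

theorem eulerProd_mul_pow_div_rpow (N k : ℕ) (y : ℝ) :
    eulerProd N (ρ * k) * (y / N ^ ρ) ^ k = eulerProd N (ρ * k) / N ^ (ρ * k) * y ^ k := by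
  rw [div_pow, rpow_mul N.cast_nonneg, rpow_natCast]
  ring

theorem tendsto_tsum_eulerProd_mul_pow (hρ : 0 < ρ) (hρ1 : ρ ≤ 1) (z : ℝ) :
    Tendsto (fun N : ℕ ↦ ∑' k : ℕ, eulerProd N (ρ * k) * (z / N ^ ρ) ^ k) atTop
      (𝓝 (mittagLeffler ρ z)) := by
  obtain ⟨M, hzM, hM⟩ := (((tendsto_natCast_rpow_atTop hρ).eventually_gt_atTop |z|).and
    (eventually_ge_atTop 1)).exists
  have hM0 : (0 : ℝ) < M ^ ρ := (abs_nonneg z).trans_lt hzM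
  have hdom : Summable fun k : ℕ ↦ eulerProd M (ρ * k) * (|z| / M ^ ρ) ^ k := by
    refine summable_mul_pow_of_mem_chooseCone (eulerProd_mul_mem_chooseCone hρ.le hρ1 M) ?_
    rwa [abs_of_nonneg (by positivity), div_lt_one hM0]
  refine tendsto_tsum_of_dominated_convergence hdom (fun k ↦ ?_) ?_
  · have hlim := (tendsto_eulerProd_div_rpow (a := ρ * k) (by positivity)).mul_const (z ^ k)
    simpa only [eulerProd_mul_pow_div_rpow, inv_mul_eq_div] using hlim
  · filter_upwards [eventually_ge_atTop M] with N hN k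
    have hk : 0 ≤ ρ * k := by positivity
    have hpos := eulerProd_pos hk N
    simp only [eulerProd_mul_pow_div_rpow]
    rw [norm_mul, norm_pow, norm_of_nonneg (by positivity), norm_eq_abs]
    gcongr ?_ * _
    exact antitoneOn_eulerProd_div_rpow hk hM (hM.trans hN) hN

theorem exists_convexOn_antitoneOn_tendsto_mittagLeffler (hρ : 0 < ρ) (hρ1 : ρ ≤ 1) :
    ∃ F : ℕ → ℝ → ℝ, (∀ N, ConvexOn ℝ (Ici 0) (F N)) ∧ (∀ N, AntitoneOn (F N) (Ici 0)) ∧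
      ∀ x, Tendsto (F · x) atTop (𝓝 (mittagLeffler ρ (-x))) := by
  choose F hconv hanti hsum using fun N ↦
    exists_convexOn_antitoneOn_hasSum (eulerProd_mul_mem_chooseCone hρ.le hρ1 N)
  have hsub : Ici (0 : ℝ) ⊆ Ioi (-1) := Ici_subset_Ioi.2 neg_one_lt_zero
  have hscale (N : ℕ) {x : ℝ} (hx : x ∈ Ici 0) : x / (N : ℝ) ^ ρ ∈ Ici 0 :=
    div_nonneg hx (by positivity)
  refine ⟨fun N x ↦ F N (x / N ^ ρ), fun N ↦ ⟨convex_Ici 0, fun x hx y hy a b ha hb hab ↦ ?_⟩,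
    fun N x hx y hy hxy ↦ ?_, fun x ↦ ?_⟩
  · simpa [add_div, mul_div_assoc] using
      (hconv N).2 (hsub (hscale N hx)) (hsub (hscale N hy)) ha hb hab
  · exact hanti N (hsub (hscale N hx)) (hsub (hscale N hy)) (by gcongr)
  · refine (tendsto_tsum_eulerProd_mul_pow hρ hρ1 (-x)).congr' ?_
    filter_upwards [(tendsto_natCast_rpow_atTop hρ).eventually_gt_atTop |x|] with N hN
    have hN0 : (0 : ℝ) < N ^ ρ := (abs_nonneg x).trans_lt hN
    rw [(hsum N (-x / N ^ ρ) ?_).tsum_eq, neg_div, neg_neg]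
    rwa [abs_div, abs_neg, abs_of_pos hN0, div_lt_one hN0]

theorem convexOn_mittagLeffler_neg (hρ : 0 < ρ) (hρ1 : ρ ≤ 1) :
    ConvexOn ℝ (Ici 0) fun x ↦ mittagLeffler ρ (-x) := by
  obtain ⟨F, hconv, -, hlim⟩ := exists_convexOn_antitoneOn_tendsto_mittagLeffler hρ hρ1
  refine ⟨convex_Ici 0, fun x hx y hy a b ha hb hab ↦ ?_⟩
  exact le_of_tendsto_of_tendsto' (hlim _) (((hlim x).const_smul a).add ((hlim y).const_smul b))
    fun N ↦ (hconv N).2 hx hy ha hb hab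

theorem antitoneOn_mittagLeffler_neg (hρ : 0 < ρ) (hρ1 : ρ ≤ 1) :
    AntitoneOn (fun x ↦ mittagLeffler ρ (-x)) (Ici 0) := by
  obtain ⟨F, -, hanti, hlim⟩ := exists_convexOn_antitoneOn_tendsto_mittagLeffler hρ hρ1
  exact fun x hx y hy hxy ↦ le_of_tendsto_of_tendsto' (hlim y) (hlim x) fun N ↦ hanti N hx hy hxy

theorem antitoneOn_deriv_mittagLeffler_neg (hρ : 0 < ρ) (hρ1 : ρ ≤ 1) :
    AntitoneOn (fun x ↦ deriv (mittagLeffler ρ) (-x)) (Ici 0) := by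
  have hmono := (convexOn_mittagLeffler_neg hρ hρ1).monotoneOn_deriv
    fun x _ ↦ (hasDerivAt_mittagLeffler_neg hρ x).differentiableAt
  simpa only [deriv_comp_neg, neg_neg] using! hmono.neg

theorem deriv_mittagLeffler_neg_nonneg (hρ : 0 < ρ) (hρ1 : ρ ≤ 1) (hx : 0 ≤ x) :
    0 ≤ deriv (mittagLeffler ρ) (-x) := by
  have hnonpos := (antitoneOn_mittagLeffler_neg hρ hρ1).derivWithin_nonpos (x := x)
  rw [(hasDerivAt_mittagLeffler_neg hρ x).hasDerivWithinAt.derivWithin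
    (uniqueDiffOn_Ici 0 x hx)] at hnonpos
  exact neg_nonpos.1 hnonpos

theorem deriv_mittagLeffler_zero_pos (hρ : 0 < ρ) : 0 < deriv (mittagLeffler ρ) 0 := by
  rw [deriv_mittagLeffler hρ, tsum_eq_single 0 fun k hk ↦ by simp [hk]]
  simpa using Gamma_pos_of_pos (by linarith)

theorem deriv_mittagLeffler_neg_pos (hρ : 0 < ρ) (hρ1 : ρ ≤ 1) (hx : 0 ≤ x) :
    0 < deriv (mittagLeffler ρ) (-x) := by
  refine (deriv_mittagLeffler_neg_nonneg hρ hρ1 hx).lt_of_ne fun hzero ↦ ?_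
  have hnear : deriv (mittagLeffler ρ) =ᶠ[𝓝 (-(x + 1))] 0 := by
    filter_upwards [Iio_mem_nhds (by linarith : -(x + 1) < -x)] with z (hz : z < -x)
    have hle := antitoneOn_deriv_mittagLeffler_neg hρ hρ1 (mem_Ici.2 hx)
      (mem_Ici.2 (by linarith : 0 ≤ -z)) (by linarith)
    have hge := deriv_mittagLeffler_neg_nonneg hρ hρ1 (by linarith : 0 ≤ -z)
    simp only [neg_neg, ← hzero] at hle hge
    exact le_antisymm hle hge
  have heq := (analyticOnNhd_mittagLeffler hρ).deriv.eqOn_zero_of_preconnected_of_eventuallyEq_zero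
    isPreconnected_univ trivial hnear
  exact (deriv_mittagLeffler_zero_pos hρ).ne' (heq (mem_univ 0))

end CompleteMonotonicity

section OrderDerivative

variable {ρ lam t : ℝ}

/-- The Riemann–Liouville integral of order `s` of `u ↦ u ^ ρ * E_ρ'(-λ u ^ ρ)`, evaluated at `t`.
It is defined by its series, which also makes sense for `s ≤ 0`. -/
noncomputable def mittagLefflerRL (ρ lam t s : ℝ) : ℝ :=
  ∑' k : ℕ, (k + 1) * (-lam) ^ k * dividedRpow t (ρ * (k + 1) + s)

theorem abs_add_one_mul_neg_pow_le (lam : ℝ) (k : ℕ) :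
    |(k + 1) * (-lam) ^ k| ≤ (2 * |lam|) ^ k := by
  rw [abs_mul, abs_pow, abs_neg, abs_of_nonneg (by positivity), mul_pow]
  gcongr
  exact natCast_add_one_le_two_pow k

theorem mittagLefflerRL_zero (hρ : 0 < ρ) (ht : 0 ≤ t) (lam : ℝ) :
    mittagLefflerRL ρ lam t 0 = t ^ ρ * deriv (mittagLeffler ρ) (-(lam * t ^ ρ)) := by
  simp only [mittagLefflerRL, add_zero, rpow_mul_deriv_mittagLeffler_neg_mul_rpow hρ ht]

theorem hasDerivAt_mittagLefflerRL_zero (hρ : 0 < ρ) (ht : 0 < t) (lam : ℝ) :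
    HasDerivAt (mittagLefflerRL ρ lam t)
      (∑' k : ℕ, (k + 1) * (-lam) ^ k * deriv (dividedRpow t) (ρ * (k + 1))) 0 := by
  have hderiv := hasDerivAt_tsum_mul_dividedRpow (q := 1) hρ ht (abs_add_one_mul_neg_pow_le lam)
    fun k ↦ by simp
  simpa only [Pi.one_apply, one_mul, mul_one] using! hderiv

/-- The derivatives in `r` of `r ↦ dividedRpow t (r * (k + 1))` bring down the same factors `k + 1`
that occur in the series of `E_ρ'`. -/
theorem hasDerivAt_mittagLeffler_neg_mul_rpow (hρ : 0 < ρ) (ht : 0 < t) (lam : ℝ) :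
    HasDerivAt (fun r ↦ mittagLeffler r (-(lam * t ^ r)))
      (-(lam * deriv (mittagLefflerRL ρ lam t) 0)) ρ := by
  have hderiv := hasDerivAt_tsum_mul_dividedRpow (c := fun k ↦ (-lam) ^ k) (q := fun k ↦ k + 1)
    (L := |lam|) hρ ht (fun k ↦ by rw [abs_pow, abs_neg]) fun k ↦ (abs_of_nonneg (by positivity)).le
  rw [← sub_self ρ] at hderiv
  have hshift := ((hderiv.comp_sub_const ρ ρ).const_mul lam).const_sub 1
  have hexponent (r : ℝ) (k : ℕ) : ρ * (k + 1) + (k + 1) * (r - ρ) = r * (k + 1) := by ring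
  have hfactor (k : ℕ) (d : ℝ) : (-lam) ^ k * (d * (k + 1)) = (k + 1) * (-lam) ^ k * d := by ring
  simp only [hexponent, hfactor] at hshift
  rw [(hasDerivAt_mittagLefflerRL_zero hρ ht lam).deriv]
  refine hshift.congr_of_eventuallyEq ?_
  filter_upwards [Ioi_mem_nhds hρ] with r hr
  exact mittagLeffler_neg_mul_rpow hr ht lam

theorem integral_rpow_mul_deriv_mittagLeffler (hρ : 0 < ρ) (ht : 0 < t) {ε : ℝ} (hε : 0 < ε)
    (lam : ℝ) :
    ∫ u in 0..t, u ^ ρ * deriv (mittagLeffler ρ) (-(lam * u ^ ρ)) * (t - u) ^ (ε - 1) =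
      Gamma ε * mittagLefflerRL ρ lam t ε := by
  rw [mittagLefflerRL, ← integral_tsum_mul_dividedRpow_mul_rpow hρ ht hε
    (abs_add_one_mul_neg_pow_le lam) fun k ↦ by linarith]
  refine intervalIntegral.integral_congr fun u hu ↦ ?_
  rw [uIcc_of_le ht.le] at hu
  simp only [rpow_mul_deriv_mittagLeffler_neg_mul_rpow hρ hu.1]

theorem mul_dividedRpow_le_mittagLefflerRL (hρ : 0 < ρ) (hρ1 : ρ ≤ 1) (hlam : 0 ≤ lam) (ht : 0 < t)
    {ε : ℝ} (hε : 0 < ε) :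
    deriv (mittagLeffler ρ) (-(lam * t ^ ρ)) * Gamma (ρ + 1) * dividedRpow t (ρ + ε) ≤
      mittagLefflerRL ρ lam t ε := by
  set W : ℝ → ℝ := fun u ↦ deriv (mittagLeffler ρ) (-(lam * u ^ ρ))
  have hW : Continuous W :=
    (analyticOnNhd_mittagLeffler hρ).deriv.continuousOn.comp_continuous
      ((continuous_rpow_const hρ.le).const_mul lam).neg fun _ ↦ trivial
  have hint : IntervalIntegrable (fun u ↦ Gamma (ρ + 1) * (dividedRpow u ρ * (t - u) ^ (ε - 1)))
      volume 0 t :=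
    (intervalIntegrable_dividedRpow_mul_rpow ht (by linarith) hε).const_mul _
  have hpow (u : ℝ) : Gamma (ρ + 1) * (dividedRpow u ρ * (t - u) ^ (ε - 1)) =
      u ^ ρ * (t - u) ^ (ε - 1) := by
    rw [← mul_assoc, Gamma_mul_dividedRpow u (by linarith)]
  refine le_of_mul_le_mul_left ?_ (Gamma_pos_of_pos hε)
  calc Gamma ε * (W t * Gamma (ρ + 1) * dividedRpow t (ρ + ε))
      = ∫ u in 0..t, W t * (u ^ ρ * (t - u) ^ (ε - 1)) := by
        simp_rw [← hpow, intervalIntegral.integral_const_mul,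
          integral_dividedRpow_mul_rpow ht (by linarith : -1 < ρ) hε]
        ring
    _ ≤ ∫ u in 0..t, W u * (u ^ ρ * (t - u) ^ (ε - 1)) := by
        simp_rw [hpow] at hint
        refine intervalIntegral.integral_mono_on ht.le (hint.const_mul _)
          (hint.continuousOn_mul hW.continuousOn) fun u hu ↦ ?_
        have hu0 : 0 ≤ u ^ ρ := rpow_nonneg hu.1 ρ
        refine mul_le_mul_of_nonneg_right ?_ (mul_nonneg hu0 (rpow_nonneg (sub_nonneg.2 hu.2) _))
        refine antitoneOn_deriv_mittagLeffler_neg hρ hρ1 (mul_nonneg hlam hu0)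
          (mul_nonneg hlam (by positivity)) ?_
        gcongr
        exacts [hu.1, hu.2]
    _ = Gamma ε * mittagLefflerRL ρ lam t ε := by
        rw [← integral_rpow_mul_deriv_mittagLeffler hρ ht hε]
        refine intervalIntegral.integral_congr fun u _ ↦ ?_
        simp only [W]
        ring1

theorem le_deriv_mittagLefflerRL_zero (hρ : 0 < ρ) (hρ1 : ρ ≤ 1) (hlam : 0 ≤ lam) (ht : 0 < t) :
    t ^ ρ * deriv (mittagLeffler ρ) (-(lam * t ^ ρ)) * (log t - logDeriv Gamma (ρ + 1)) ≤
      deriv (mittagLefflerRL ρ lam t) 0 := by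
  have hρ' : -1 < ρ := by linarith
  set b : ℝ := deriv (mittagLeffler ρ) (-(lam * t ^ ρ)) * Gamma (ρ + 1)
  have hb : b * dividedRpow t ρ = t ^ ρ * deriv (mittagLeffler ρ) (-(lam * t ^ ρ)) := by
    rw [mul_assoc, Gamma_mul_dividedRpow t hρ', mul_comm]
  have hpower : HasDerivAt (fun s ↦ b * dividedRpow t (ρ + s))
      (b * (dividedRpow t ρ * (log t - logDeriv Gamma (ρ + 1)))) 0 := by
    have hg := hasDerivAt_dividedRpow ht hρ'
    rw [← add_zero ρ] at hg
    simpa only [add_zero] using (hg.comp_const_add ρ 0).const_mul b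
  rw [← hb, mul_assoc]
  refine deriv_le_deriv_of_forall_gt_le hpower
    (hasDerivAt_mittagLefflerRL_zero hρ ht lam).differentiableAt.hasDerivAt ?_
    fun ε hε ↦ mul_dividedRpow_le_mittagLefflerRL hρ hρ1 hlam ht hε
  simp only [add_zero, hb, mittagLefflerRL_zero hρ ht.le]

theorem logDeriv_Gamma_add_one_lt_log (hρ : 0 < ρ) (hρ1 : ρ ≤ 1)
    (ht : exp (1 - eulerMascheroniConstant) < t) : logDeriv Gamma (ρ + 1) < log t :=
  calc logDeriv Gamma (ρ + 1)
      ≤ logDeriv Gamma 2 :=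
        monotoneOn_logDeriv_Gamma (mem_Ioi.2 (by linarith)) (mem_Ioi.2 two_pos) (by linarith)
    _ = 1 - eulerMascheroniConstant := logDeriv_Gamma_two
    _ < log t := (lt_log_iff_exp_lt ((exp_pos _).trans ht)).2 ht

end OrderDerivative

theorem exp_one_sub_eulerMascheroniConstant_lt_two : exp (1 - eulerMascheroniConstant) < 2 :=
  (lt_log_iff_exp_lt two_pos).1 <| by
    linarith [log_two_gt_d9, one_half_lt_eulerMascheroniConstant]

theorem two_mul_mul_exp_neg_div_lt : 2 * 43 * exp (-(43 / 4.6)) < 0.0075 := by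
  have hint : (2.7182818283 : ℝ) ^ 9 ≤ exp 9 :=
    calc (2.7182818283 : ℝ) ^ 9 ≤ exp 1 ^ 9 := by gcongr; exact exp_one_gt_d9.le
      _ = exp 9 := by rw [← exp_nat_mul]; norm_num
  have hfrac : (1.4155 : ℝ) ≤ exp (8 / 23) := by
    refine le_trans ?_ (sum_le_exp_of_nonneg (by norm_num) 5)
    norm_num [Finset.sum_range_succ, Nat.factorial]
  have hexp : (11468 : ℝ) ≤ exp (43 / 4.6) :=
    calc (11468 : ℝ) ≤ 2.7182818283 ^ 9 * 1.4155 := by norm_num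
      _ ≤ exp 9 * exp (8 / 23) := by gcongr
      _ = exp (43 / 4.6) := by rw [← exp_add]; norm_num
  rw [exp_neg, ← div_eq_mul_inv, div_lt_iff₀ (exp_pos _)]
  linarith

theorem stmt3_general {lam t : ℝ} (hlam : 0 < lam) (ht : exp (1 - eulerMascheroniConstant) < t) :
    StrictAntiOn (fun ρ ↦ mittagLeffler ρ (-(lam * t ^ ρ))) (Ioc 0 1) := by
  have ht0 : 0 < t := (exp_pos _).trans ht
  refine strictAntiOn_of_deriv_neg (convex_Ioc 0 1)
    (HasDerivAt.continuousOn fun ρ hρ ↦ hasDerivAt_mittagLeffler_neg_mul_rpow hρ.1 ht0 lam)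
    fun ρ hρ ↦ ?_
  obtain ⟨hρ, hρ1⟩ := interior_subset hρ
  have hE : 0 < deriv (mittagLeffler ρ) (-(lam * t ^ ρ)) :=
    deriv_mittagLeffler_neg_pos hρ hρ1 (by positivity)
  have hψ := sub_pos.2 (logDeriv_Gamma_add_one_lt_log hρ hρ1 ht)
  have hRL : 0 < deriv (mittagLefflerRL ρ lam t) 0 :=
    (mul_pos (mul_pos (rpow_pos_of_pos ht0 ρ) hE) hψ).trans_le
      (le_deriv_mittagLefflerRL_zero hρ hρ1 hlam.le ht0)
  rw [(hasDerivAt_mittagLeffler_neg_mul_rpow hρ ht0 lam).deriv]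
  exact neg_neg_of_pos (mul_pos hlam hRL)

/-- With `B₁ = 43`, `B₂ = 4.6`: if `ρ₀λ₀ > 2B₁e^{−B₁/B₂}` and `2 ≤ t₀ ≤ e^{B₁/B₂}`,
then for every `λ ≥ λ₀` the function `ρ ↦ E_ρ(−λ t₀^ρ)` is strictly decreasing on
`[ρ₀, 1)`; moreover `2B₁e^{−B₁/B₂} < 0.0075` (so the hypothesis holds whenever
`ρ₀λ₀ > 0.0075`, e.g. with `t₀ = 2`). -/
theorem stmt3 (ρ₀ lam₀ t₀ : ℝ) (hρ₀ : 0 < ρ₀) (hρ₀' : ρ₀ < 1) (hlam₀ : 0 < lam₀)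
    (h : 2 * 43 * Real.exp (-(43 / 4.6)) < ρ₀ * lam₀)
    (ht₀ : 2 ≤ t₀) (ht₀' : t₀ ≤ Real.exp (43 / 4.6)) :
    (∀ lam : ℝ, lam₀ ≤ lam →
      StrictAntiOn (fun ρ : ℝ => mittagLeffler ρ (-(lam * t₀ ^ ρ))) (Set.Ico ρ₀ 1)) ∧
    2 * 43 * Real.exp (-(43 / 4.6)) < 0.0075 := by
  have ht : exp (1 - eulerMascheroniConstant) < t₀ :=
    exp_one_sub_eulerMascheroniConstant_lt_two.trans_le ht₀
  exact ⟨fun lam hlam ↦ (stmt3_general (hlam₀.trans_le hlam) ht).mono fun ρ hρ ↦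
    ⟨hρ₀.trans_le hρ.1, hρ.2.le⟩, two_mul_mul_exp_neg_div_lt⟩
end
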